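/- Small incremental entangling for the relative entropy of entanglement in an ancilla-free system: let ρ(t) = e^{t𝓛}(|Ψ⟩⟨Ψ|) be the solution of dρ/dt = 𝓛(ρ) with pure initial state |Ψ⟩⟨Ψ| on H_A ⊗ H_B, where 𝓛(ρ) = −i[H,ρ] + Σ_α (L_α ρ L_α† − ½ L_α† L_α ρ − ½ ρ L_α† L_α) with H Hermitian. Let E_R denote the relative entropy of entanglement with respect to the bipartite cut A–B and let d = min(d_A, d_B). Then for every ε > 0 there exists δ > 0 such that for all 0 < Δt < δ, (E_R(ρ(Δt)) − E_R(ρ(0)))/Δt ≤ 4(‖H‖ + 86 Σ_α ‖L_α‖²) ln d + ε. -/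

import Mathlib

open Matrix Kronecker
open scoped ComplexOrder

/-- Operator norm of a complex matrix: the norm of the induced operator on Euclidean space. -/
noncomputable def opNorm {n : Type*} [Fintype n] [DecidableEq n]
    (A : Matrix n n ℂ) : ℝ :=
  ‖Matrix.toEuclideanCLM (𝕜 := ℂ) A‖

/-- Matrix logarithm of a Hermitian matrix, defined by functional calculus via the spectral
decomposition (and as `0` on non-Hermitian matrices).  Since `Real.log 0 = 0`, on a positive
semidefinite matrix this is the logarithm on the support. -/
noncomputable def mlog {n : Type*} [Fintype n] [DecidableEq n]
    (A : Matrix n n ℂ) : Matrix n n ℂ :=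
  if hA : A.IsHermitian then
    (hA.eigenvectorUnitary : Matrix n n ℂ) *
      Matrix.diagonal (fun i => (Real.log (hA.eigenvalues i) : ℂ)) *
      (star (hA.eigenvectorUnitary : Matrix n n ℂ))
  else 0

/-- The Lindblad generator `𝓛(ρ) = -i[H,ρ] + Σ_α (L_α ρ L_α† - ½ L_α† L_α ρ - ½ ρ L_α† L_α)`. -/
noncomputable def lindblad {n : Type*} [Fintype n] {ι : Type*} [Fintype ι]
    (H : Matrix n n ℂ) (L : ι → Matrix n n ℂ) (ρ : Matrix n n ℂ) : Matrix n n ℂ :=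
  -(Complex.I) • (H * ρ - ρ * H) +
    ∑ α, (L α * ρ * (L α)ᴴ - (2:ℂ)⁻¹ • ((L α)ᴴ * (L α) * ρ) - (2:ℂ)⁻¹ • (ρ * (L α)ᴴ * (L α)))

/-- Partial trace over the second tensor factor. -/
noncomputable def ptraceR {m p : Type*} [Fintype p]
    (ρ : Matrix (m × p) (m × p) ℂ) : Matrix m m ℂ :=
  Matrix.of fun i j => ∑ b, ρ (i, b) (j, b)

/-- Partial trace over the first tensor factor. -/
noncomputable def ptraceL {m p : Type*} [Fintype m]
    (ρ : Matrix (m × p) (m × p) ℂ) : Matrix p p ℂ :=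
  Matrix.of fun i j => ∑ a, ρ (a, i) (a, j)

/-- A density matrix: positive semidefinite with trace one. -/
noncomputable def IsDensityMatrix {n : Type*} [Fintype n] (ρ : Matrix n n ℂ) : Prop :=
  ρ.PosSemidef ∧ ρ.trace = 1

/-- Von Neumann entropy `S(ρ) = -Tr(ρ ln ρ) = -Σ_i λ_i ln λ_i` (with `0 ln 0 = 0`). -/
noncomputable def vNEntropy {n : Type*} [Fintype n] [DecidableEq n]
    (ρ : Matrix n n ℂ) : ℝ :=
  if h : ρ.IsHermitian then -∑ i, (h.eigenvalues i) * Real.log (h.eigenvalues i) else 0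

/-- A separable state on the bipartite cut `A–B`: a convex combination of product
density matrices. -/
noncomputable def IsSeparableState {dA dB : ℕ}
    (σ : Matrix (Fin dA × Fin dB) (Fin dA × Fin dB) ℂ) : Prop :=
  ∃ (k : ℕ) (w : Fin k → ℝ) (σA : Fin k → Matrix (Fin dA) (Fin dA) ℂ)
      (σB : Fin k → Matrix (Fin dB) (Fin dB) ℂ),
    (∀ j, 0 ≤ w j) ∧ (∑ j, w j = 1) ∧
    (∀ j, IsDensityMatrix (σA j)) ∧ (∀ j, IsDensityMatrix (σB j)) ∧
    σ = ∑ j, (w j : ℂ) • (σA j ⊗ₖ σB j)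

/-- Quantum relative entropy `D(ρ‖σ) = Tr(ρ ln ρ - ρ ln σ)` (finite expression, valid when
the support of `ρ` is contained in that of `σ`). -/
noncomputable def relEntropy {n : Type*} [Fintype n] [DecidableEq n]
    (ρ σ : Matrix n n ℂ) : ℝ :=
  ((ρ * (mlog ρ - mlog σ)).trace).re

/-- `supp ρ ⊆ supp σ`, phrased via kernels (for Hermitian matrices this is support
containment); when this fails, `D(ρ‖σ) = +∞` and `σ` does not contribute to the infimum
defining the relative entropy of entanglement. -/
noncomputable def SuppLE {n : Type*} [Fintype n] (ρ σ : Matrix n n ℂ) : Prop :=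
  ∀ v : n → ℂ, σ.mulVec v = 0 → ρ.mulVec v = 0

/-- Relative entropy of entanglement: the infimum of `D(ρ‖σ)` over separable `σ`
(the states with `D(ρ‖σ) = +∞` being discarded). -/
noncomputable def relEntEntanglement {dA dB : ℕ}
    (ρ : Matrix (Fin dA × Fin dB) (Fin dA × Fin dB) ℂ) : ℝ :=
  sInf { x : ℝ | ∃ σ : Matrix (Fin dA × Fin dB) (Fin dA × Fin dB) ℂ, IsSeparableState σ ∧ SuppLE ρ σ ∧ x = relEntropy ρ σ }

/-!
Let `S` be the entropy of the reduced state of `Ψ`. Every separable `σ` satisfies `σ ≤ τ ⊗ 1` for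
some density matrix `τ`, so operator monotonicity of the logarithm gives `S ≤ E_R(|Ψ⟩⟨Ψ|)`. For an
upper bound on `E_R(ρ(t))`, each eigenvector of `ρ(t)` is given a separable trial state diagonal in
a Schmidt basis: that of `Ψ` for the dominant eigenvector, its own for any other, at a cost of at
most `log d`. Mixing the trial states with the eigenvalues of `ρ(t)` as weights costs no more than
the corresponding average. With `P = |Ψ⟩⟨Ψ|`, to first order in `t` the other eigenvectors have
total weight at most `-t ⟨Ψ, 𝓛(P) Ψ⟩`, while the dominant one has moved away from `Ψ` by
`t ‖𝓛(P) Ψ - ⟨Ψ, 𝓛(P) Ψ⟩ Ψ‖`, which changes its cross entropy with the Schmidt weights of `Ψ`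
by at most `4 log d` times this distance. Both quantities are bounded by the operator norms of `H`
and `L α`.
-/

local notation "toOp" => Matrix.toEuclideanCLM (𝕜 := ℂ)

section ExpectationValues

variable {n : Type*}

/-- The operator `|v⟩⟨v|`. -/
def ketBra (v : EuclideanSpace ℂ n) : Matrix n n ℂ :=
  vecMulVec v.ofLp (star v.ofLp)

lemma posSemidef_ketBra [Finite n] (v : EuclideanSpace ℂ n) : (ketBra v).PosSemidef :=
  posSemidef_vecMulVec_self_star _

variable [Fintype n]

lemma trace_ketBra (v : EuclideanSpace ℂ n) : (ketBra v).trace = (‖v‖ ^ 2 : ℝ) := by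
  rw [ketBra, trace_vecMulVec, ← EuclideanSpace.inner_eq_star_dotProduct,
    inner_self_eq_norm_sq_to_K]
  norm_cast

variable [DecidableEq n]

/-- The expectation value `⟨v, A v⟩` of a matrix `A` in the (not necessarily normalized) vector
`v`, as a real linear functional of `A`. -/
noncomputable def expVal (v : EuclideanSpace ℂ n) : Matrix n n ℂ →ₗ[ℝ] ℝ where
  toFun A := (inner ℂ v (toOp A v)).re
  map_add' A B := by simp
  map_smul' c A := by
    rw [← Complex.coe_smul, map_smul, _root_.smul_apply, inner_smul_right]
    simp

lemma expVal_apply (v : EuclideanSpace ℂ n) (A : Matrix n n ℂ) :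
    expVal v A = (inner ℂ v (toOp A v)).re := rfl

lemma expVal_one (v : EuclideanSpace ℂ n) : expVal v 1 = ‖v‖ ^ 2 := by
  rw [expVal_apply, map_one, one_apply_eq_self, inner_self_eq_norm_sq_to_K]
  norm_cast

lemma adjoint_toOp (A : Matrix n n ℂ) : (toOp A).adjoint = toOp Aᴴ := by
  rw [← star_eq_conjTranspose, map_star, ContinuousLinearMap.star_eq_adjoint]

lemma inner_toOp_left (A : Matrix n n ℂ) (v w : EuclideanSpace ℂ n) :
    inner ℂ (toOp A v) w = inner ℂ v (toOp Aᴴ w) := by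
  rw [← adjoint_toOp, ContinuousLinearMap.adjoint_inner_right]

lemma posSemidef_iff_expVal {A : Matrix n n ℂ} :
    A.PosSemidef ↔ A.IsHermitian ∧ ∀ v, 0 ≤ expVal v A := by
  rw [← Matrix.isPositive_toEuclideanLin_iff, LinearMap.IsPositive,
    Matrix.isSymmetric_toEuclideanLin_iff]
  refine and_congr_right fun _ => forall_congr' fun v => ?_
  rw [inner_re_symm]
  rfl

lemma expVal_nonneg {A : Matrix n n ℂ} (hA : A.PosSemidef) (v : EuclideanSpace ℂ n) :
    0 ≤ expVal v A :=
  (posSemidef_iff_expVal.1 hA).2 v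

open scoped MatrixOrder in
lemma expVal_mono {A B : Matrix n n ℂ} (h : A ≤ B) (v : EuclideanSpace ℂ n) :
    expVal v A ≤ expVal v B := by
  simpa using expVal_nonneg (Matrix.le_iff.1 h) v

lemma posDef_of_expVal_pos {A : Matrix n n ℂ} (hA : A.IsHermitian)
    (h : ∀ v ≠ 0, 0 < expVal v A) : A.PosDef := by
  have hpsd : A.PosSemidef := posSemidef_iff_expVal.2 ⟨hA, fun v => by
    rcases eq_or_ne v 0 with rfl | hv
    · simp [expVal_apply]
    · exact (h v hv).le⟩
  refine hpsd.posDef_iff_det_ne_zero.2 fun hdet => ?_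
  obtain ⟨v, hv, hAv⟩ := exists_mulVec_eq_zero_iff.2 hdet
  refine (h (WithLp.toLp 2 v) (by simpa using hv)).ne' ?_
  simp [expVal_apply, hAv]

lemma toOp_ketBra (v : EuclideanSpace ℂ n) :
    toOp (ketBra v) = InnerProductSpace.rankOne ℂ v v := by
  ext w i
  simp [ketBra, vecMulVec_mulVec, EuclideanSpace.inner_eq_star_dotProduct, dotProduct_comm,
    mul_comm]

lemma toOp_ketBra_apply (v w : EuclideanSpace ℂ n) : toOp (ketBra v) w = inner ℂ v w • v := by
  rw [toOp_ketBra, InnerProductSpace.rankOne_apply]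

lemma trace_ketBra_mul (v : EuclideanSpace ℂ n) (A : Matrix n n ℂ) :
    (ketBra v * A).trace = inner ℂ v (toOp A v) := by
  rw [ketBra, vecMulVec_mul, trace_vecMulVec, EuclideanSpace.inner_eq_star_dotProduct,
    ofLp_toEuclideanCLM, dotProduct_comm, dotProduct_comm (A *ᵥ _), dotProduct_mulVec]

lemma expVal_ketBra (v w : EuclideanSpace ℂ n) : expVal v (ketBra w) = ‖inner ℂ w v‖ ^ 2 := by
  rw [expVal_apply, toOp_ketBra_apply, inner_smul_right, ← inner_conj_symm v w, Complex.mul_conj',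
    ← Complex.ofReal_pow, Complex.ofReal_re]

end ExpectationValues

section SpectralMatrices

variable {n ι : Type*} [Fintype n] [Fintype ι]

/-- The Hermitian matrix with orthonormal eigenbasis `b` and corresponding eigenvalues `c`. -/
noncomputable def spectralMatrix (b : OrthonormalBasis ι ℂ (EuclideanSpace ℂ n)) (c : ι → ℝ) :
    Matrix n n ℂ :=
  ∑ k, c k • ketBra (b k)

lemma isHermitian_spectralMatrix (b : OrthonormalBasis ι ℂ (EuclideanSpace ℂ n)) (c : ι → ℝ) :
    (spectralMatrix b c).IsHermitian := by
  simp only [spectralMatrix, IsHermitian, conjTranspose_sum, conjTranspose_smul, star_trivial,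
    (posSemidef_ketBra _).isHermitian.eq]

variable [DecidableEq n]

lemma expVal_spectralMatrix (b : OrthonormalBasis ι ℂ (EuclideanSpace ℂ n)) (c : ι → ℝ)
    (v : EuclideanSpace ℂ n) :
    expVal v (spectralMatrix b c) = ∑ k, c k * ‖inner ℂ (b k) v‖ ^ 2 := by
  simp only [spectralMatrix, map_sum, map_smul, expVal_ketBra, smul_eq_mul]

lemma toOp_spectralMatrix_basis (b : OrthonormalBasis ι ℂ (EuclideanSpace ℂ n)) (c : ι → ℝ)
    (k : ι) : toOp (spectralMatrix b c) (b k) = c k • b k := by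
  simp only [spectralMatrix, ← Complex.coe_smul, map_sum, map_smul,
    _root_.sum_apply, _root_.smul_apply, toOp_ketBra_apply]
  rw [Finset.sum_eq_single k (fun j _ hj => by simp [b.inner_eq_zero hj]) (by simp)]
  simp

lemma eq_spectralMatrix {b : OrthonormalBasis ι ℂ (EuclideanSpace ℂ n)} {c : ι → ℝ}
    {A : Matrix n n ℂ} (h : ∀ k, toOp A (b k) = c k • b k) : A = spectralMatrix b c := by
  refine (toOp).injective (ContinuousLinearMap.coe_injective (b.toBasis.ext fun k => ?_))
  simpa only [b.coe_toBasis] using! (h k).trans (toOp_spectralMatrix_basis b c k).symm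

lemma toOp_eigenvectorBasis {A : Matrix n n ℂ} (hA : A.IsHermitian) (k : n) :
    toOp A (hA.eigenvectorBasis k) = hA.eigenvalues k • hA.eigenvectorBasis k :=
  WithLp.ofLp_injective 2 (hA.mulVec_eigenvectorBasis k)

lemma eq_spectralMatrix_eigenvectorBasis {A : Matrix n n ℂ} (hA : A.IsHermitian) :
    A = spectralMatrix hA.eigenvectorBasis hA.eigenvalues :=
  eq_spectralMatrix (toOp_eigenvectorBasis hA)

lemma trace_spectralMatrix_mul (b : OrthonormalBasis ι ℂ (EuclideanSpace ℂ n)) (c : ι → ℝ)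
    (A : Matrix n n ℂ) :
    (spectralMatrix b c * A).trace.re = ∑ k, c k * expVal (b k) A := by
  simp only [spectralMatrix, Finset.sum_mul, trace_sum, smul_mul, trace_smul, Complex.re_sum,
    trace_ketBra_mul, Complex.smul_re, smul_eq_mul, expVal_apply]

end SpectralMatrices

section MatrixLogarithm

variable {n ι : Type*} [Fintype n] [DecidableEq n] [Fintype ι]

open scoped MatrixOrder Matrix.Norms.L2Operator

lemma mlog_eq_log (A : Matrix n n ℂ) : mlog A = CFC.log A := by
  by_cases hA : A.IsHermitian
  · rw [CFC.log, hA.cfc_eq, Matrix.IsHermitian.cfc, Unitary.conjStarAlgAut_apply]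
    simp [mlog, hA, Function.comp_def]
  · rw [CFC.log, mlog, dif_neg hA, cfc_apply_of_not_predicate A (p := IsSelfAdjoint) hA]

lemma isHermitian_mlog (A : Matrix n n ℂ) : (mlog A).IsHermitian :=
  mlog_eq_log A ▸ IsSelfAdjoint.log

lemma mlog_mono {A B : Matrix n n ℂ} (hA : A.PosDef) (hAB : A ≤ B) : mlog A ≤ mlog B := by
  let _ : CStarAlgebra (Matrix n n ℂ) := {}
  rw [mlog_eq_log, mlog_eq_log]
  exact CFC.log_le_log hAB hA.isStrictlyPositive

lemma mlog_smul {A : Matrix n n ℂ} (hA : A.PosDef) {r : ℝ} (hr : 0 < r) :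
    mlog (r • A) = Real.log r • (1 : Matrix n n ℂ) + mlog A := by
  let _ : CStarAlgebra (Matrix n n ℂ) := {}
  rw [mlog_eq_log, mlog_eq_log, CFC.log_smul' A hr hA.isStrictlyPositive,
    Algebra.algebraMap_eq_smul_one]

lemma mlog_eq_spectralMatrix {A : Matrix n n ℂ} (hA : A.IsHermitian) :
    mlog A = spectralMatrix hA.eigenvectorBasis fun k => Real.log (hA.eigenvalues k) := by
  refine eq_spectralMatrix fun k => WithLp.ofLp_injective 2 ?_
  rw [ofLp_toEuclideanCLM, mlog, dif_pos hA, ← mulVec_mulVec, hA.star_eigenvectorUnitary_mulVec,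
    ← mulVec_mulVec, diagonal_mulVec_single, mul_one, ← mul_one (Complex.ofReal _),
    ← smul_eq_mul, Pi.single_smul, mulVec_smul, hA.eigenvectorUnitary_mulVec]
  simp

lemma toOp_mlog_of_eigenvector {A : Matrix n n ℂ} (hA : A.IsHermitian) {v : EuclideanSpace ℂ n}
    {μ : ℝ} (h : toOp A v = μ • v) : toOp (mlog A) v = Real.log μ • v := by
  have hlog (k : n) : Real.log (hA.eigenvalues k) * inner ℂ (hA.eigenvectorBasis k) v
      = Real.log μ * inner ℂ (hA.eigenvectorBasis k) v := by
    have hinner := inner_toOp_left A (hA.eigenvectorBasis k) v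
    simp only [toOp_eigenvectorBasis, hA.eq, h, inner_smul_right_eq_smul, Complex.real_smul,
      inner_smul_left_eq_smul] at hinner
    rcases mul_eq_mul_right_iff.1 hinner with heq | hzero
    · rw [Complex.ofReal_inj.1 heq]
    · simp only [hzero, mul_zero]
  refine hA.eigenvectorBasis.repr.injective (WithLp.ofLp_injective 2 (funext fun k => ?_))
  rw [hA.eigenvectorBasis.repr_apply_apply, hA.eigenvectorBasis.repr_apply_apply,
    ← (isHermitian_mlog A).eq, ← inner_toOp_left, mlog_eq_spectralMatrix hA,
    toOp_spectralMatrix_basis]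
  simpa only [inner_smul_left_eq_smul, inner_smul_right_eq_smul, Complex.real_smul] using hlog k

lemma mlog_spectralMatrix (b : OrthonormalBasis ι ℂ (EuclideanSpace ℂ n)) (c : ι → ℝ) :
    mlog (spectralMatrix b c) = spectralMatrix b fun k => Real.log (c k) :=
  eq_spectralMatrix fun k =>
    toOp_mlog_of_eigenvector (isHermitian_spectralMatrix b c) (toOp_spectralMatrix_basis b c k)

end MatrixLogarithm

lemma mul_log_sub_log_le {p c : ℝ} (hp : 0 ≤ p) (hc : 0 < c) :
    p * (Real.log c - Real.log p) ≤ c - p := by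
  rcases hp.eq_or_lt with rfl | hp
  · simp [hc.le]
  · rw [← Real.log_div hc.ne' hp.ne']
    calc p * Real.log (c / p) ≤ p * (c / p - 1) := by
          gcongr
          exact Real.log_le_sub_one_of_pos (div_pos hc hp)
      _ = c - p := by field_simp

section RelativeEntropy

variable {n : Type*} [Fintype n] [DecidableEq n]

lemma sum_eigenvalues_eq_re_trace {A : Matrix n n ℂ} (hA : A.IsHermitian) :
    ∑ k, hA.eigenvalues k = A.trace.re := by
  simp [hA.trace_eq_sum_eigenvalues]

lemma relEntropy_eq_sum {ρ : Matrix n n ℂ} (hρ : ρ.IsHermitian) (σ : Matrix n n ℂ) :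
    relEntropy ρ σ = ∑ k, hρ.eigenvalues k *
      (Real.log (hρ.eigenvalues k) - expVal (hρ.eigenvectorBasis k) (mlog σ)) := by
  have htrace := trace_spectralMatrix_mul hρ.eigenvectorBasis hρ.eigenvalues (mlog ρ - mlog σ)
  rw [← eq_spectralMatrix_eigenvectorBasis hρ] at htrace
  rw [relEntropy, htrace]
  refine Finset.sum_congr rfl fun k _ => ?_
  rw [map_sub, expVal_apply _ (mlog ρ), toOp_mlog_of_eigenvector hρ (toOp_eigenvectorBasis hρ k)]
  simp [inner_smul_right_eq_smul]

lemma relEntropy_ketBra {Ψ : EuclideanSpace ℂ n} (hΨ : ‖Ψ‖ = 1) (σ : Matrix n n ℂ) :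
    relEntropy (ketBra Ψ) σ = -expVal Ψ (mlog σ) := by
  have hΨeig : toOp (ketBra Ψ) Ψ = (1 : ℝ) • Ψ := by
    rw [toOp_ketBra_apply, inner_self_eq_norm_sq_to_K, hΨ]
    simp
  have hlog := toOp_mlog_of_eigenvector (posSemidef_ketBra Ψ).isHermitian hΨeig
  rw [relEntropy, trace_ketBra_mul, ← expVal_apply, map_sub, expVal_apply Ψ (mlog (ketBra Ψ)), hlog]
  simp

theorem klein_inequality {ρ σ : Matrix n n ℂ} (hρ : ρ.PosSemidef) (hσ : σ.PosDef) :
    ρ.trace.re - σ.trace.re ≤ relEntropy ρ σ := by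
  have hρH := hρ.isHermitian
  have hσH := hσ.isHermitian
  set overlap : n → n → ℝ := fun k j =>
    ‖inner ℂ (hσH.eigenvectorBasis j) (hρH.eigenvectorBasis k)‖ ^ 2
  have hrow (k : n) : ∑ j, overlap k j = 1 := by
    simp [overlap, OrthonormalBasis.sum_sq_norm_inner_right]
  have hcol (j : n) : ∑ k, overlap k j = 1 := by
    simp [overlap, OrthonormalBasis.sum_sq_norm_inner_left]
  calc ρ.trace.re - σ.trace.re
      = ∑ k, ∑ j, overlap k j * (hρH.eigenvalues k - hσH.eigenvalues j) := by
        simp only [mul_sub, Finset.sum_sub_distrib, ← Finset.sum_mul, hrow, one_mul,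
          sum_eigenvalues_eq_re_trace]
        rw [Finset.sum_comm]
        simp only [← Finset.sum_mul, hcol, one_mul, sum_eigenvalues_eq_re_trace]
    _ ≤ ∑ k, ∑ j, overlap k j * (hρH.eigenvalues k *
          (Real.log (hρH.eigenvalues k) - Real.log (hσH.eigenvalues j))) := by
        refine Finset.sum_le_sum fun k _ => Finset.sum_le_sum fun j _ => ?_
        have := mul_log_sub_log_le (hρ.eigenvalues_nonneg k) (hσ.eigenvalues_pos j)
        gcongr
        linarith
    _ = relEntropy ρ σ := by
        rw [relEntropy_eq_sum hρH, mlog_eq_spectralMatrix hσH]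
        refine Finset.sum_congr rfl fun k _ => ?_
        simp only [expVal_spectralMatrix, mul_sub, Finset.sum_sub_distrib, ← Finset.sum_mul,
          overlap, hrow, one_mul, Finset.mul_sum]
        congr 1
        exact Finset.sum_congr rfl fun j _ => by ring

lemma vNEntropy_eq_sum_negMulLog {A : Matrix n n ℂ} (hA : A.IsHermitian) :
    vNEntropy A = ∑ k, Real.negMulLog (hA.eigenvalues k) := by
  simp only [vNEntropy, dif_pos hA, Real.negMulLog, neg_mul, Finset.sum_neg_distrib]

lemma relEntropy_eq_neg_vNEntropy_sub {ρ : Matrix n n ℂ} (hρ : ρ.IsHermitian)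
    (σ : Matrix n n ℂ) : relEntropy ρ σ = -vNEntropy ρ - (ρ * mlog σ).trace.re := by
  have htrace := trace_spectralMatrix_mul hρ.eigenvectorBasis hρ.eigenvalues (mlog σ)
  rw [← eq_spectralMatrix_eigenvectorBasis hρ] at htrace
  rw [relEntropy_eq_sum hρ, htrace, vNEntropy, dif_pos hρ]
  simp only [mul_sub, Finset.sum_sub_distrib, neg_neg]

end RelativeEntropy

section DensityMatrices

variable {n : Type*} [Fintype n]

open scoped MatrixOrder

lemma convex_setOf_isDensityMatrix : Convex ℝ {ρ : Matrix n n ℂ | IsDensityMatrix ρ} := by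
  intro ρ hρ σ hσ a b ha hb hab
  refine ⟨(hρ.1.smul ha).add (hσ.1.smul hb), ?_⟩
  rw [trace_add, trace_smul, trace_smul, hρ.2, hσ.2, ← add_smul, hab, one_smul]

lemma isDensityMatrix_kronecker {p : Type*} [Fintype p] {ρ : Matrix n n ℂ} {σ : Matrix p p ℂ}
    (hρ : IsDensityMatrix ρ) (hσ : IsDensityMatrix σ) : IsDensityMatrix (ρ ⊗ₖ σ) :=
  ⟨hρ.1.kronecker hσ.1, by rw [trace_kronecker, hρ.2, hσ.2, one_mul]⟩

lemma isDensityMatrix_ketBra {v : EuclideanSpace ℂ n} (hv : ‖v‖ = 1) :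
    IsDensityMatrix (ketBra v) :=
  ⟨posSemidef_ketBra v, by simp [trace_ketBra, hv]⟩

variable [DecidableEq n]

lemma IsDensityMatrix.sum_eigenvalues {ρ : Matrix n n ℂ} (hρ : IsDensityMatrix ρ) :
    ∑ k, hρ.1.isHermitian.eigenvalues k = 1 := by
  rw [sum_eigenvalues_eq_re_trace, hρ.2, Complex.one_re]

lemma IsDensityMatrix.eigenvalues_le_one {ρ : Matrix n n ℂ} (hρ : IsDensityMatrix ρ) (k : n) :
    hρ.1.isHermitian.eigenvalues k ≤ 1 :=
  hρ.sum_eigenvalues ▸ Finset.single_le_sum (fun j _ => hρ.1.eigenvalues_nonneg j)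
    (Finset.mem_univ k)

lemma IsDensityMatrix.le_one {ρ : Matrix n n ℂ} (hρ : IsDensityMatrix ρ) : ρ ≤ 1 := by
  refine Matrix.le_iff.2 (posSemidef_iff_expVal.2
    ⟨isHermitian_one.sub hρ.1.isHermitian, fun v => ?_⟩)
  rw [map_sub, sub_nonneg, expVal_one, eq_spectralMatrix_eigenvectorBasis hρ.1.isHermitian,
    expVal_spectralMatrix, ← hρ.1.isHermitian.eigenvectorBasis.sum_sq_norm_inner_right v]
  exact Finset.sum_le_sum fun k _ =>
    mul_le_of_le_one_left (sq_nonneg _) (hρ.eigenvalues_le_one k)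

lemma IsDensityMatrix.expVal_mlog_nonpos {σ : Matrix n n ℂ} (hσ : IsDensityMatrix σ)
    (v : EuclideanSpace ℂ n) : expVal v (mlog σ) ≤ 0 := by
  rw [mlog_eq_spectralMatrix hσ.1.isHermitian, expVal_spectralMatrix]
  exact Finset.sum_nonpos fun k _ => mul_nonpos_of_nonpos_of_nonneg
    (Real.log_nonpos (hσ.1.eigenvalues_nonneg k) (hσ.eigenvalues_le_one k)) (sq_nonneg _)

end DensityMatrices

section ProductVectors

variable {m p : Type*}

/-- The product vector `α ⊗ β`. -/
def prodVec (α : EuclideanSpace ℂ m) (β : EuclideanSpace ℂ p) : EuclideanSpace ℂ (m × p) :=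
  WithLp.toLp 2 fun x => α x.1 * β x.2

lemma ketBra_prodVec (α : EuclideanSpace ℂ m) (β : EuclideanSpace ℂ p) :
    ketBra (prodVec α β) = ketBra α ⊗ₖ ketBra β := by
  ext x y
  simp only [ketBra, prodVec, vecMulVec_apply, kroneckerMap_apply, Pi.star_apply, star_mul']
  ring

variable [Fintype m] [Fintype p]

/-- The partial inner product `⟨α|v⟩`, a vector of the second factor. -/
noncomputable def partialInner (α : EuclideanSpace ℂ m) (v : EuclideanSpace ℂ (m × p)) :
    EuclideanSpace ℂ p :=
  WithLp.toLp 2 fun j => inner ℂ α (WithLp.toLp 2 fun i => v (i, j))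

lemma inner_prodVec (α : EuclideanSpace ℂ m) (β : EuclideanSpace ℂ p)
    (v : EuclideanSpace ℂ (m × p)) : inner ℂ (prodVec α β) v = inner ℂ β (partialInner α v) := by
  simp only [PiLp.inner_apply, prodVec, partialInner, RCLike.inner_apply,
    Fintype.sum_prod_type_right, map_mul, Finset.sum_mul]
  exact Finset.sum_congr rfl fun j _ => Finset.sum_congr rfl fun i _ => by ring

lemma inner_prodVec_prodVec (α α' : EuclideanSpace ℂ m) (β β' : EuclideanSpace ℂ p) :
    inner ℂ (prodVec α β) (prodVec α' β') = inner ℂ α α' * inner ℂ β β' := by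
  simp only [PiLp.inner_apply, prodVec, RCLike.inner_apply, Fintype.sum_prod_type, map_mul,
    Finset.sum_mul_sum]
  exact Finset.sum_congr rfl fun j _ => Finset.sum_congr rfl fun i _ => by ring

/-- An orthonormal basis of a bipartite space all of whose members are products of unit vectors;
mixtures of its members are separable. -/
def IsProductBasis {ι : Type*} [Fintype ι] (b : OrthonormalBasis ι ℂ (EuclideanSpace ℂ (m × p))) :
    Prop :=
  ∀ k, ∃ α β, ‖α‖ = 1 ∧ ‖β‖ = 1 ∧ b k = prodVec α β

end ProductVectors

section SeparableStates

variable {dA dB : ℕ} {ι : Type*} [Fintype ι]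

open scoped MatrixOrder

lemma isSeparableState_iff_mem_convexHull {σ : Matrix (Fin dA × Fin dB) (Fin dA × Fin dB) ℂ} :
    IsSeparableState σ ↔ σ ∈ convexHull ℝ {τ | ∃ τA τB, IsDensityMatrix τA ∧ IsDensityMatrix τB ∧
      τ = τA ⊗ₖ τB} := by
  rw [mem_convexHull_iff_exists_fintype]
  constructor
  · rintro ⟨k, w, σA, σB, hw, hsum, hA, hB, rfl⟩
    exact ⟨Fin k, inferInstance, w, fun j => σA j ⊗ₖ σB j, hw, hsum,
      fun j => ⟨_, _, hA j, hB j, rfl⟩, by simp only [Complex.coe_smul]⟩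
  · rintro ⟨κ, _, w, z, hw, hsum, hz, rfl⟩
    choose σA σB hA hB hz using hz
    let e := (Fintype.equivFin κ).symm
    refine ⟨Fintype.card κ, w ∘ e, σA ∘ e, σB ∘ e, fun j => hw _, hsum ▸ e.sum_comp w,
      fun j => hA _, fun j => hB _, ?_⟩
    simp only [Complex.coe_smul, Function.comp_apply, ← hz]
    exact (e.sum_comp fun j => w j • z j).symm

lemma isSeparableState_sum {w : ι → ℝ} {σ : ι → Matrix (Fin dA × Fin dB) (Fin dA × Fin dB) ℂ}
    (hw : ∀ j, 0 ≤ w j) (hsum : ∑ j, w j = 1) (hσ : ∀ j, IsSeparableState (σ j)) :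
    IsSeparableState (∑ j, w j • σ j) := by
  simp only [isSeparableState_iff_mem_convexHull] at hσ ⊢
  exact (convex_convexHull ℝ _).sum_mem (fun j _ => hw j) hsum fun j _ => hσ j

lemma IsSeparableState.isDensityMatrix {σ : Matrix (Fin dA × Fin dB) (Fin dA × Fin dB) ℂ}
    (hσ : IsSeparableState σ) : IsDensityMatrix σ := by
  refine convexHull_min ?_ convex_setOf_isDensityMatrix (isSeparableState_iff_mem_convexHull.1 hσ)
  rintro _ ⟨τA, τB, hA, hB, rfl⟩
  exact isDensityMatrix_kronecker hA hB

lemma IsSeparableState.exists_le_kronecker_one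
    {σ : Matrix (Fin dA × Fin dB) (Fin dA × Fin dB) ℂ} (hσ : IsSeparableState σ) :
    ∃ τ : Matrix (Fin dA) (Fin dA) ℂ, IsDensityMatrix τ ∧
      σ ≤ τ ⊗ₖ (1 : Matrix (Fin dB) (Fin dB) ℂ) := by
  refine convexHull_min (t := {σ | ∃ τ, IsDensityMatrix τ ∧
    σ ≤ τ ⊗ₖ (1 : Matrix (Fin dB) (Fin dB) ℂ)}) ?_ ?_ (isSeparableState_iff_mem_convexHull.1 hσ)
  · rintro _ ⟨τA, τB, hA, hB, rfl⟩
    refine ⟨τA, hA, Matrix.le_iff.2 ?_⟩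
    have hsub : τA ⊗ₖ (1 : Matrix (Fin dB) (Fin dB) ℂ) - τA ⊗ₖ τB = τA ⊗ₖ (1 - τB) := by
      ext x y
      simp [mul_sub]
    exact hsub ▸ hA.1.kronecker (Matrix.le_iff.1 hB.le_one)
  · rintro σ₁ ⟨τ₁, hτ₁, hle₁⟩ σ₂ ⟨τ₂, hτ₂, hle₂⟩ a b ha hb hab
    refine ⟨a • τ₁ + b • τ₂, convex_setOf_isDensityMatrix hτ₁ hτ₂ ha hb hab, ?_⟩
    rw [add_kronecker, smul_kronecker, smul_kronecker]
    gcongr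

lemma isSeparableState_spectralMatrix
    {b : OrthonormalBasis ι ℂ (EuclideanSpace ℂ (Fin dA × Fin dB))} (hb : IsProductBasis b)
    {c : ι → ℝ} (hc : ∀ k, 0 ≤ c k) (hsum : ∑ k, c k = 1) :
    IsSeparableState (spectralMatrix b c) := by
  refine isSeparableState_sum hc hsum fun k => isSeparableState_iff_mem_convexHull.2
    (subset_convexHull ℝ _ ?_)
  obtain ⟨α, β, hα, hβ, hk⟩ := hb k
  exact ⟨_, _, isDensityMatrix_ketBra hα, isDensityMatrix_ketBra hβ, by rw [hk, ketBra_prodVec]⟩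

end SeparableStates

section ProductBases

variable {m p : Type*} [Fintype m] [Fintype p]

lemma orthonormal_prodVec (b : OrthonormalBasis m ℂ (EuclideanSpace ℂ m))
    (B : m → OrthonormalBasis p ℂ (EuclideanSpace ℂ p)) :
    Orthonormal ℂ fun x : m × p => prodVec (b x.1) (B x.1 x.2) := by
  classical
  rw [orthonormal_iff_ite]
  rintro ⟨i, j⟩ ⟨i', j'⟩
  rw [inner_prodVec_prodVec, b.inner_eq_ite]
  by_cases hi : i = i'
  · subst hi
    simp [(B i).inner_eq_ite]
  · simp [hi]

/-- The product basis `b i ⊗ B i j`, in which the basis of the second factor may depend on the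
vector of the first one. -/
noncomputable def prodBasis (b : OrthonormalBasis m ℂ (EuclideanSpace ℂ m))
    (B : m → OrthonormalBasis p ℂ (EuclideanSpace ℂ p)) :
    OrthonormalBasis (m × p) ℂ (EuclideanSpace ℂ (m × p)) :=
  .mk (orthonormal_prodVec b B)
    ((orthonormal_prodVec b B).linearIndependent.span_eq_top_of_card_eq_finrank' (by simp)).ge

lemma prodBasis_apply (b : OrthonormalBasis m ℂ (EuclideanSpace ℂ m))
    (B : m → OrthonormalBasis p ℂ (EuclideanSpace ℂ p)) (x : m × p) :
    prodBasis b B x = prodVec (b x.1) (B x.1 x.2) := by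
  simp [prodBasis]

lemma isProductBasis_prodBasis (b : OrthonormalBasis m ℂ (EuclideanSpace ℂ m))
    (B : m → OrthonormalBasis p ℂ (EuclideanSpace ℂ p)) : IsProductBasis (prodBasis b B) :=
  fun x => ⟨b x.1, B x.1 x.2, b.norm_eq_one _, (B x.1).norm_eq_one _, prodBasis_apply b B x⟩

variable [DecidableEq p]

lemma toOp_kronecker_prodVec [DecidableEq m] (A : Matrix m m ℂ) (B : Matrix p p ℂ)
    (α : EuclideanSpace ℂ m) (β : EuclideanSpace ℂ p) :
    toOp (A ⊗ₖ B) (prodVec α β) = prodVec (toOp A α) (toOp B β) := by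
  ext x
  simp only [prodVec, toEuclideanCLM_toLp, mulVec, dotProduct, kroneckerMap_apply,
    Fintype.sum_prod_type, ofLp_toEuclideanCLM, Finset.sum_mul_sum]
  exact Finset.sum_congr rfl fun i _ => Finset.sum_congr rfl fun j _ => by ring

lemma spectralMatrix_kronecker_one (b : OrthonormalBasis m ℂ (EuclideanSpace ℂ m)) (c : m → ℝ) :
    spectralMatrix b c ⊗ₖ (1 : Matrix p p ℂ) =
      spectralMatrix (prodBasis b fun _ => EuclideanSpace.basisFun p ℂ) fun x => c x.1 := by
  classical
  refine eq_spectralMatrix fun x => ?_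
  rw [prodBasis_apply, toOp_kronecker_prodVec, toOp_spectralMatrix_basis, map_one,
    one_apply_eq_self]
  ext y
  simp [prodVec]

lemma mlog_kronecker_one [DecidableEq m] {A : Matrix m m ℂ} (hA : A.IsHermitian) :
    mlog (A ⊗ₖ (1 : Matrix p p ℂ)) = mlog A ⊗ₖ 1 := by
  rw [mlog_eq_spectralMatrix hA, spectralMatrix_kronecker_one, ← mlog_spectralMatrix,
    ← spectralMatrix_kronecker_one, ← eq_spectralMatrix_eigenvectorBasis hA]

end ProductBases

section ReducedStates

variable {m p : Type*} [Fintype p]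

lemma ptraceR_ketBra (Ψ : EuclideanSpace ℂ (m × p)) :
    ptraceR (ketBra Ψ) = ∑ j, ketBra (WithLp.toLp 2 fun i => Ψ (i, j)) := by
  ext i i'
  simp [ptraceR, ketBra, vecMulVec_apply, Matrix.sum_apply]

lemma posSemidef_ptraceR_ketBra [Finite m] (Ψ : EuclideanSpace ℂ (m × p)) :
    (ptraceR (ketBra Ψ)).PosSemidef :=
  ptraceR_ketBra Ψ ▸ posSemidef_sum _ fun _ _ => posSemidef_ketBra _

variable [Fintype m]

lemma trace_ptraceR_mul [DecidableEq p] (ρ : Matrix (m × p) (m × p) ℂ) (A : Matrix m m ℂ) :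
    (ptraceR ρ * A).trace = (ρ * (A ⊗ₖ (1 : Matrix p p ℂ))).trace := by
  simp only [ptraceR, Matrix.trace, diag_apply, mul_apply, of_apply, kroneckerMap_apply,
    Fintype.sum_prod_type, Matrix.one_apply, mul_ite, mul_one, mul_zero, Finset.sum_ite_eq',
    Finset.mem_univ, if_true, Finset.sum_mul]
  exact Finset.sum_congr rfl fun i _ => Finset.sum_comm

lemma isDensityMatrix_ptraceR_ketBra {Ψ : EuclideanSpace ℂ (m × p)} (hΨ : ‖Ψ‖ = 1) :
    IsDensityMatrix (ptraceR (ketBra Ψ)) := by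
  classical
  refine ⟨posSemidef_ptraceR_ketBra Ψ, ?_⟩
  have htrace := trace_ptraceR_mul (ketBra Ψ) (1 : Matrix m m ℂ)
  rwa [one_kronecker_one, mul_one, mul_one, (isDensityMatrix_ketBra hΨ).2] at htrace

variable [DecidableEq m]

lemma expVal_ptraceR_ketBra (Ψ : EuclideanSpace ℂ (m × p)) (α : EuclideanSpace ℂ m) :
    expVal α (ptraceR (ketBra Ψ)) = ‖partialInner α Ψ‖ ^ 2 := by
  simp only [ptraceR_ketBra, map_sum, expVal_ketBra, EuclideanSpace.norm_sq_eq, partialInner,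
    norm_inner_symm]

lemma expVal_kronecker_one [DecidableEq p] (Ψ : EuclideanSpace ℂ (m × p)) (A : Matrix m m ℂ) :
    expVal Ψ (A ⊗ₖ (1 : Matrix p p ℂ)) = (ptraceR (ketBra Ψ) * A).trace.re := by
  rw [trace_ptraceR_mul, trace_ketBra_mul, expVal_apply]

end ReducedStates

section EntropyLowerBound

open scoped MatrixOrder

lemma expVal_mlog_le_expVal_mlog_add_smul_one {n : Type*} [Fintype n] [DecidableEq n]
    {σ : Matrix n n ℂ} (hσ : σ.PosSemidef) {v : EuclideanSpace ℂ n}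
    (hsupp : ∀ w, toOp σ w = 0 → inner ℂ w v = 0) {η : ℝ} (hη : 0 < η) :
    expVal v (mlog σ) ≤ expVal v (mlog (σ + η • 1)) := by
  have hσH := hσ.isHermitian
  have hadd : σ + η • 1 = spectralMatrix hσH.eigenvectorBasis fun k => hσH.eigenvalues k + η :=
    eq_spectralMatrix fun k => by
      rw [map_add, _root_.add_apply, toOp_eigenvectorBasis, ← Complex.coe_smul η, map_smul]
      simp [add_smul]
  rw [hadd, mlog_spectralMatrix, mlog_eq_spectralMatrix hσH, expVal_spectralMatrix,
    expVal_spectralMatrix]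
  refine Finset.sum_le_sum fun k _ => ?_
  rcases (hσ.eigenvalues_nonneg k).eq_or_lt with hzero | hpos
  · rw [hsupp _ (by rw [toOp_eigenvectorBasis, ← hzero, zero_smul])]
    simp
  · gcongr
    linarith

lemma inner_eq_zero_of_suppLE_ketBra {n : Type*} [Fintype n] [DecidableEq n] {σ : Matrix n n ℂ}
    {v : EuclideanSpace ℂ n} (hsupp : SuppLE (ketBra v) σ) {w : EuclideanSpace ℂ n}
    (hw : toOp σ w = 0) : inner ℂ w v = 0 := by
  rcases eq_or_ne v 0 with rfl | hv
  · exact inner_zero_right w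
  have hzero : toOp (ketBra v) w = 0 :=
    WithLp.ofLp_injective 2 (hsupp w (by simpa using congrArg WithLp.ofLp hw))
  rw [toOp_ketBra_apply, smul_eq_zero_iff_left hv] at hzero
  rw [← inner_conj_symm, hzero, map_zero]

/-- A separable `σ` lies below `τ ⊗ 1`, which bounds the entanglement of `Ψ` from below by the
relative entropy of its reduced state. -/
lemma vNEntropy_ptraceR_le_relEntropy {dA dB : ℕ}
    {Ψ : EuclideanSpace ℂ (Fin dA × Fin dB)} (hΨ : ‖Ψ‖ = 1)
    {σ : Matrix (Fin dA × Fin dB) (Fin dA × Fin dB) ℂ} (hσ : IsSeparableState σ)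
    (hsupp : SuppLE (ketBra Ψ) σ) :
    vNEntropy (ptraceR (ketBra Ψ)) ≤ relEntropy (ketBra Ψ) σ := by
  obtain ⟨τ, hτ, hle⟩ := hσ.exists_le_kronecker_one
  have hσpsd := hσ.isDensityMatrix.1
  have hρ := isDensityMatrix_ptraceR_ketBra hΨ
  suffices h : ∀ η > 0, vNEntropy (ptraceR (ketBra Ψ)) ≤ relEntropy (ketBra Ψ) σ + η * dA by
    refine le_of_forall_pos_le_add fun ε hε => (h (ε / (dA + 1)) (by positivity)).trans ?_
    gcongr
    rw [div_mul_eq_mul_div, div_le_iff₀ (by positivity)]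
    nlinarith
  intro η hη
  have hτpd : (τ + η • 1).PosDef := .posSemidef_add hτ.1 (.smul .one hη)
  have hσpd : (σ + η • 1).PosDef := .posSemidef_add hσpsd (.smul .one hη)
  have hle' : σ + η • 1 ≤ (τ + η • 1) ⊗ₖ (1 : Matrix (Fin dB) (Fin dB) ℂ) := by
    rw [add_kronecker, smul_kronecker, one_kronecker_one]
    gcongr
  have hlog : expVal Ψ (mlog σ) ≤ (ptraceR (ketBra Ψ) * mlog (τ + η • 1)).trace.re := by
    rw [← expVal_kronecker_one, ← mlog_kronecker_one hτpd.isHermitian]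
    exact (expVal_mlog_le_expVal_mlog_add_smul_one hσpsd
      (fun _ => inner_eq_zero_of_suppLE_ketBra hsupp) hη).trans
      (expVal_mono (mlog_mono hσpd hle') Ψ)
  have hklein := klein_inequality hρ.1 hτpd
  rw [relEntropy_eq_neg_vNEntropy_sub hρ.1.isHermitian, hρ.2, trace_add, hτ.2, trace_smul,
    trace_one, Fintype.card_fin] at hklein
  simp only [Complex.add_re, Complex.one_re, Complex.smul_re, Complex.natCast_re,
    smul_eq_mul] at hklein
  rw [relEntropy_ketBra hΨ]
  linarith

end EntropyLowerBound

section SchmidtDecomposition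

open scoped Finset

variable {m p : Type*} [Fintype p]

lemma exists_orthonormalBasis_eq_norm_smul (v : EuclideanSpace ℂ p) (j₀ : p) :
    ∃ B : OrthonormalBasis p ℂ (EuclideanSpace ℂ p), v = (‖v‖ : ℂ) • B j₀ := by
  classical
  rcases eq_or_ne v 0 with rfl | hv
  · exact ⟨EuclideanSpace.basisFun p ℂ, by simp⟩
  have hunit : Orthonormal ℂ (({j₀} : Set p).domRestrict fun _ => (‖v‖⁻¹ : ℂ) • v) :=
    orthonormal_iff_ite.2 fun i j => by
      simp [Subsingleton.elim i j, norm_smul, inner_self_eq_norm_sq_to_K, hv]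
  obtain ⟨B, hB⟩ := hunit.exists_orthonormalBasis_extension_of_card_eq (by simp)
  refine ⟨B, ?_⟩
  rw [hB j₀ rfl, smul_inv_smul₀ (by simpa using hv)]

variable [Fintype m]

lemma rank_ptraceR_ketBra_le (Ψ : EuclideanSpace ℂ (m × p)) :
    (ptraceR (ketBra Ψ)).rank ≤ Fintype.card p := by
  let M : Matrix m p ℂ := .of fun i j => Ψ (i, j)
  have hM : ptraceR (ketBra Ψ) = M * Mᴴ := by
    ext i i'
    simp [M, ptraceR, ketBra, vecMulVec_apply, mul_apply]
  exact hM ▸ (rank_mul_le_left M Mᴴ).trans M.rank_le_card_width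

theorem exists_schmidt_basis [DecidableEq m] [Nonempty p]
    (Ψ : EuclideanSpace ℂ (m × p)) :
    ∃ b : OrthonormalBasis (m × p) ℂ (EuclideanSpace ℂ (m × p)), IsProductBasis b ∧
      #{x | ‖inner ℂ (b x) Ψ‖ ^ 2 ≠ 0} ≤ min (Fintype.card m) (Fintype.card p) ∧
      ∑ x, Real.negMulLog (‖inner ℂ (b x) Ψ‖ ^ 2) = vNEntropy (ptraceR (ketBra Ψ)) := by
  classical
  obtain ⟨j₀⟩ := ‹Nonempty p›
  have hρ := (posSemidef_ptraceR_ketBra Ψ).isHermitian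
  choose B hB using fun i =>
    exists_orthonormalBasis_eq_norm_smul (partialInner (hρ.eigenvectorBasis i) Ψ) j₀
  have hrow (i : m) : ‖partialInner (hρ.eigenvectorBasis i) Ψ‖ ^ 2 = hρ.eigenvalues i := by
    rw [← expVal_ptraceR_ketBra, expVal_apply, toOp_eigenvectorBasis, inner_smul_right_eq_smul]
    simp
  have hweight (x : m × p) : ‖inner ℂ (prodBasis hρ.eigenvectorBasis B x) Ψ‖ ^ 2 =
      if x.2 = j₀ then hρ.eigenvalues x.1 else 0 := by
    rw [prodBasis_apply, inner_prodVec, hB x.1, inner_smul_right, (B x.1).inner_eq_ite, ← hrow]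
    split_ifs <;> simp
  refine ⟨prodBasis hρ.eigenvectorBasis B, isProductBasis_prodBasis _ _, ?_, ?_⟩
  · have hcard : #{x | ‖inner ℂ (prodBasis hρ.eigenvectorBasis B x) Ψ‖ ^ 2 ≠ 0} ≤
        #{i | hρ.eigenvalues i ≠ 0} := by
      simp only [hweight, ne_eq, ite_eq_right_iff, Classical.not_imp]
      refine Finset.card_le_card_of_injOn Prod.fst (fun x hx => ?_) fun x hx y hy hxy => ?_
      · simp only [Finset.coe_filter, Set.mem_ofPred_eq] at hx ⊢
        exact ⟨Finset.mem_univ _, hx.2.2⟩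
      · simp only [Finset.coe_filter, Set.mem_ofPred_eq] at hx hy
        exact Prod.ext hxy (hx.2.1.trans hy.2.1.symm)
    have hrank := hρ.rank_eq_card_non_zero_eigs
    rw [Fintype.card_subtype] at hrank
    exact hcard.trans (le_min (Finset.card_le_univ _) (hrank ▸ rank_ptraceR_ketBra_le Ψ))
  · simp only [vNEntropy_eq_sum_negMulLog hρ, hweight, apply_ite Real.negMulLog,
      Real.negMulLog_zero, Fintype.sum_prod_type, Finset.sum_ite_eq', Finset.mem_univ, if_true]

end SchmidtDecomposition

section FiniteDistributions

open scoped Finset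

variable {ι : Type*} [Fintype ι]

lemma sum_negMulLog_le_log {p : ι → ℝ} (hp : ∀ i, 0 ≤ p i) (hsum : ∑ i, p i = 1) {d : ℕ}
    (hd : #{i | p i ≠ 0} ≤ d) : ∑ i, Real.negMulLog (p i) ≤ Real.log d := by
  have hcard : (∑ i, if p i ≠ 0 then (d : ℝ)⁻¹ else 0) ≤ 1 := by
    rw [← Finset.sum_filter, Finset.sum_const, nsmul_eq_mul]
    calc (#{i | p i ≠ 0} : ℝ) * (d : ℝ)⁻¹ ≤ d * (d : ℝ)⁻¹ := by gcongr
      _ ≤ 1 := mul_inv_le_one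
  have hterm (i : ι) :
      Real.negMulLog (p i) ≤ p i * Real.log d + (if p i ≠ 0 then (d : ℝ)⁻¹ else 0) - p i := by
    by_cases hi : p i = 0
    · simp [hi]
    have hdpos : (0 : ℝ) < d := by
      exact_mod_cast (Finset.card_pos.2 ⟨i, by simpa using hi⟩).trans_le hd
    have hgibbs := mul_log_sub_log_le (hp i) (inv_pos.2 hdpos)
    rw [Real.log_inv] at hgibbs
    rw [if_pos hi, Real.negMulLog]
    linarith
  calc ∑ i, Real.negMulLog (p i)
      ≤ ∑ i, (p i * Real.log d + (if p i ≠ 0 then (d : ℝ)⁻¹ else 0) - p i) :=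
        Finset.sum_le_sum fun i _ => hterm i
    _ ≤ Real.log d := by
        rw [Finset.sum_sub_distrib, Finset.sum_add_distrib, ← Finset.sum_mul, hsum]
        linarith

lemma concaveOn_log_sq : ConcaveOn ℝ (Set.Ici (Real.exp 1)) fun x => Real.log x ^ 2 := by
  have hpos {x : ℝ} (hx : x ∈ Set.Ici (Real.exp 1)) : x ≠ 0 := ((Real.exp_pos 1).trans_le hx).ne'
  have hderiv {x : ℝ} (hx : x ∈ Set.Ici (Real.exp 1)) :
      HasDerivAt (fun x => Real.log x ^ 2) (2 * (Real.log x / x)) x := by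
    exact ((Real.hasDerivAt_log (hpos hx)).fun_pow 2).congr_deriv (by norm_num; ring)
  refine AntitoneOn.concaveOn_of_deriv (convex_Ici _)
    (fun x hx => (hderiv hx).continuousAt.continuousWithinAt)
    (fun x hx => (hderiv (interior_subset hx)).differentiableAt.differentiableWithinAt)
    fun x hx y hy hxy => ?_
  rw [(hderiv (interior_subset hx)).deriv, (hderiv (interior_subset hy)).deriv]
  have := Real.log_div_self_antitoneOn (interior_subset hx) (interior_subset hy) hxy
  linarith

/-- Jensen's inequality for `log²`, whose argument is shifted into the range `[e, ∞)` of
concavity. -/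
lemma sum_mul_log_sq_le_log_add_exp_sq {p : ι → ℝ} (hp : ∀ i, 0 ≤ p i) (hsum : ∑ i, p i = 1) :
    ∑ i, p i * Real.log (p i) ^ 2 ≤ Real.log (#{i | p i ≠ 0} + (Real.exp 1 - 1)) ^ 2 := by
  have hle (i : ι) : p i ≤ 1 := hsum ▸ Finset.single_le_sum (fun j _ => hp j) (Finset.mem_univ i)
  have hpos {i : ι} (hi : i ∈ ({i | p i ≠ 0} : Finset ι)) : 0 < p i :=
    (hp i).lt_of_ne' (Finset.mem_filter.1 hi).2
  have hone : 1 ≤ Real.exp 1 := Real.one_le_exp zero_le_one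
  calc ∑ i, p i * Real.log (p i) ^ 2
      = ∑ i with p i ≠ 0, p i * Real.log (p i) ^ 2 :=
        (Finset.sum_filter_of_ne fun i _ => left_ne_zero_of_mul).symm
    _ ≤ ∑ i with p i ≠ 0, p i • Real.log ((p i)⁻¹ + (Real.exp 1 - 1)) ^ 2 := by
        refine Finset.sum_le_sum fun i hi => mul_le_mul_of_nonneg_left ?_ (hp i)
        rw [← neg_sq, ← Real.log_inv]
        have := (one_le_inv₀ (hpos hi)).2 (hle i)
        gcongr
        · exact Real.log_nonneg this
        · linarith
    _ ≤ Real.log (∑ i with p i ≠ 0, p i • ((p i)⁻¹ + (Real.exp 1 - 1))) ^ 2 := by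
        refine concaveOn_log_sq.le_map_sum (fun i _ => hp i) ?_ fun i hi => ?_
        · rw [Finset.sum_filter_ne_zero, hsum]
        · have := (one_le_inv₀ (hpos hi)).2 (hle i)
          rw [Set.mem_Ici]
          linarith
    _ = Real.log (#{i | p i ≠ 0} + (Real.exp 1 - 1)) ^ 2 := by
        simp only [smul_eq_mul, mul_add, Finset.sum_add_distrib, ← Finset.sum_mul,
          Finset.sum_filter_ne_zero, hsum, one_mul]
        rw [Finset.sum_congr rfl fun i hi => mul_inv_cancel₀ (hpos hi).ne']
        simp

lemma sum_mul_log_sq_le {p : ι → ℝ} (hp : ∀ i, 0 ≤ p i) (hsum : ∑ i, p i = 1) {d : ℕ}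
    (hd : #{i | p i ≠ 0} ≤ d) : ∑ i, p i * Real.log (p i) ^ 2 ≤ (2 * Real.log d) ^ 2 := by
  have hle (i : ι) : p i ≤ 1 := hsum ▸ Finset.single_le_sum (fun j _ => hp j) (Finset.mem_univ i)
  rcases lt_or_ge d 2 with hd2 | hd2
  · have hlog : Real.log d = 0 := by interval_cases d <;> simp
    have hentropy := (Finset.sum_eq_zero_iff_of_nonneg fun i _ =>
      Real.negMulLog_nonneg (hp i) (hle i)).1 <| le_antisymm
        (hlog ▸ sum_negMulLog_le_log hp hsum hd)
        (Finset.sum_nonneg fun i _ => Real.negMulLog_nonneg (hp i) (hle i))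
    refine (Finset.sum_eq_zero fun i hi => ?_).trans_le (sq_nonneg _)
    have : p i * Real.log (p i) = 0 := by simpa [Real.negMulLog] using hentropy i hi
    rw [sq, ← mul_assoc, this, zero_mul]
  · refine (sum_mul_log_sq_le_log_add_exp_sq hp hsum).trans ?_
    have hexp := Real.exp_one_lt_d9
    have hcard : (#{i | p i ≠ 0} : ℝ) ≤ d := by exact_mod_cast hd
    have htwo : (2 : ℝ) ≤ d := by exact_mod_cast hd2
    have hone := Real.one_le_exp zero_le_one
    have hcard_one : (1 : ℝ) ≤ #{i | p i ≠ 0} := by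
      obtain ⟨i, _, hi⟩ := Finset.exists_ne_zero_of_sum_ne_zero (hsum ▸ one_ne_zero)
      exact_mod_cast Finset.card_pos.2 ⟨i, by simpa using hi⟩
    have hlog : (2 : ℝ) * Real.log d = Real.log ((d : ℝ) ^ 2) := by simp
    rw [hlog]
    gcongr
    · exact Real.log_nonneg (by linarith)
    · nlinarith

/-- The mixture, with weight `s`, of the distribution `p` with the uniform one. -/
noncomputable def mixUniform (s : ℝ) (p : ι → ℝ) (i : ι) : ℝ :=
  (1 - s) * p i + s / Fintype.card ι

lemma sum_mixUniform [Nonempty ι] (s : ℝ) {p : ι → ℝ} (hsum : ∑ i, p i = 1) :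
    ∑ i, mixUniform s p i = 1 := by
  simp only [mixUniform, Finset.sum_add_distrib, ← Finset.mul_sum, hsum, Finset.sum_const,
    Finset.card_univ, nsmul_eq_mul]
  field_simp
  ring

lemma div_card_le_mixUniform {s : ℝ} (hs : s ≤ 1) {p : ι → ℝ} (hp : ∀ i, 0 ≤ p i) (i : ι) :
    s / Fintype.card ι ≤ mixUniform s p i :=
  le_add_of_nonneg_left (mul_nonneg (sub_nonneg.2 hs) (hp i))

lemma mixUniform_pos [Nonempty ι] {s : ℝ} (hs₀ : 0 < s) (hs₁ : s ≤ 1) {p : ι → ℝ}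
    (hp : ∀ i, 0 ≤ p i) (i : ι) : 0 < mixUniform s p i :=
  (div_pos hs₀ (Nat.cast_pos.2 Fintype.card_pos)).trans_le (div_card_le_mixUniform hs₁ hp i)

lemma log_one_sub_add_log_le_log_mixUniform {s : ℝ} (hs₀ : 0 ≤ s) (hs₁ : s < 1) {p : ι → ℝ}
    {i : ι} (hi : 0 < p i) : Real.log (1 - s) + Real.log (p i) ≤ Real.log (mixUniform s p i) := by
  have hs : 0 < 1 - s := by linarith
  rw [← Real.log_mul hs.ne' hi.ne']
  exact Real.log_le_log (by positivity) (le_add_of_nonneg_right (by positivity))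

lemma neg_log_sq_nonneg {y : ι → ℝ} (hy₁ : ∑ n, y n ^ 2 = 1) (n : ι) :
    0 ≤ -Real.log (y n ^ 2) :=
  neg_nonneg.2 (Real.log_nonpos (sq_nonneg _)
    (hy₁ ▸ Finset.single_le_sum (fun j _ => sq_nonneg (y j)) (Finset.mem_univ n)))

lemma log_card_div_nonneg [Nonempty ι] {s : ℝ} (hs₀ : 0 < s) (hs₁ : s ≤ 1) :
    0 ≤ Real.log (Fintype.card ι / s) := by
  have : (1 : ℝ) ≤ Fintype.card ι := by exact_mod_cast Fintype.card_pos (α := ι)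
  exact Real.log_nonneg (by rw [le_div_iff₀ hs₀]; linarith)

/-- The cost `-log` of a basis vector outside the support of `y` is only `log (card ι / s)`, and
there `x` itself equals the deviation `x - y`. -/
lemma neg_log_mixUniform_mul_sq_le [Nonempty ι] {y : ι → ℝ} (hy : ∀ n, 0 ≤ y n)
    (hy₁ : ∑ n, y n ^ 2 = 1) {s : ℝ} (hs₀ : 0 < s) (hs₁ : s < 1) (x : ℝ) (n : ι) :
    -Real.log (mixUniform s (fun n => y n ^ 2) n) * x ^ 2 ≤
      -Real.log (1 - s) * x ^ 2 + Real.negMulLog (y n ^ 2) +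
        2 * ((x - y n) * (y n * -Real.log (y n ^ 2))) +
        (∑ n, -Real.log (y n ^ 2) + Real.log (Fintype.card ι / s)) * (x - y n) ^ 2 := by
  have hlog := neg_log_sq_nonneg hy₁
  have hM : -Real.log (y n ^ 2) ≤ ∑ n, -Real.log (y n ^ 2) :=
    Finset.single_le_sum (fun j _ => hlog j) (Finset.mem_univ n)
  rcases (hy n).eq_or_lt with hzero | hpos
  · have hmix : -Real.log (mixUniform s (fun n => y n ^ 2) n) ≤ Real.log (Fintype.card ι / s) := by
      rw [← Real.log_inv, ← inv_div]
      exact Real.log_le_log (inv_pos.2 (mixUniform_pos hs₀ hs₁.le (fun n => sq_nonneg (y n)) n))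
        (inv_anti₀ (div_pos hs₀ (Nat.cast_pos.2 Fintype.card_pos))
          (div_card_le_mixUniform hs₁.le (fun n => sq_nonneg (y n)) n))
    have hlog_s : 0 ≤ -Real.log (1 - s) :=
      neg_nonneg.2 (Real.log_nonpos (by linarith) (by linarith))
    have hmix_sq := mul_le_mul_of_nonneg_right hmix (sq_nonneg x)
    have hlog_s_sq := mul_nonneg hlog_s (sq_nonneg x)
    have hsum_sq := mul_nonneg ((hlog n).trans hM) (sq_nonneg x)
    rw [← hzero, zero_pow two_ne_zero, Real.negMulLog_zero]
    linarith
  · have hmix := log_one_sub_add_log_le_log_mixUniform (p := fun n => y n ^ 2) hs₀.le hs₁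
      (i := n) (by positivity)
    have hx := mul_le_mul_of_nonneg_right hmix (sq_nonneg x)
    have hdev := mul_le_mul_of_nonneg_right hM (sq_nonneg (x - y n))
    have hdev_card := mul_nonneg (log_card_div_nonneg (ι := ι) hs₀ hs₁.le) (sq_nonneg (x - y n))
    rw [Real.negMulLog]
    nlinarith

/-- Stability of the cross entropy `-∑ x² log y²` under small deviations of `x` from `y`: the
first-order term is controlled by the Cauchy–Schwarz inequality. -/
lemma sum_neg_log_mixUniform_mul_sq_le [Nonempty ι] {x y : ι → ℝ} (hy : ∀ n, 0 ≤ y n)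
    (hx₁ : ∑ n, x n ^ 2 = 1) (hy₁ : ∑ n, y n ^ 2 = 1) {s δ : ℝ} (hs₀ : 0 < s) (hs₁ : s < 1)
    (hδ : ∑ n, (x n - y n) ^ 2 ≤ δ) :
    ∑ n, -Real.log (mixUniform s (fun n => y n ^ 2) n) * x n ^ 2 ≤
      -Real.log (1 - s) + ∑ n, Real.negMulLog (y n ^ 2) +
        2 * (√δ * √(∑ n, y n ^ 2 * Real.log (y n ^ 2) ^ 2)) +
        (∑ n, -Real.log (y n ^ 2) + Real.log (Fintype.card ι / s)) * δ := by
  have hcauchy : ∑ n, (x n - y n) * (y n * -Real.log (y n ^ 2)) ≤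
      √δ * √(∑ n, y n ^ 2 * Real.log (y n ^ 2) ^ 2) := by
    refine (Real.sum_mul_le_sqrt_mul_sqrt _ _ _).trans ?_
    simp only [mul_pow, neg_sq]
    gcongr
  have hcoeff : 0 ≤ ∑ n, -Real.log (y n ^ 2) + Real.log (Fintype.card ι / s) :=
    add_nonneg (Finset.sum_nonneg fun n _ => neg_log_sq_nonneg hy₁ n)
      (log_card_div_nonneg hs₀ hs₁.le)
  calc ∑ n, -Real.log (mixUniform s (fun n => y n ^ 2) n) * x n ^ 2
      ≤ -Real.log (1 - s) + ∑ n, Real.negMulLog (y n ^ 2) +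
          2 * ∑ n, (x n - y n) * (y n * -Real.log (y n ^ 2)) +
          (∑ n, -Real.log (y n ^ 2) + Real.log (Fintype.card ι / s)) * ∑ n, (x n - y n) ^ 2 := by
        refine (Finset.sum_le_sum fun n _ =>
          neg_log_mixUniform_mul_sq_le hy hy₁ hs₀ hs₁ (x n) n).trans_eq ?_
        simp only [Finset.sum_add_distrib, ← Finset.mul_sum, hx₁, mul_one]
    _ ≤ -Real.log (1 - s) + ∑ n, Real.negMulLog (y n ^ 2) +
          2 * (√δ * √(∑ n, y n ^ 2 * Real.log (y n ^ 2) ^ 2)) +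
          (∑ n, -Real.log (y n ^ 2) + Real.log (Fintype.card ι / s)) * δ := by gcongr

end FiniteDistributions

section SpectralTrialStates

open scoped MatrixOrder

variable {n : Type*} [Fintype n]

lemma posDef_spectralMatrix {ι : Type*} [Fintype ι]
    (b : OrthonormalBasis ι ℂ (EuclideanSpace ℂ n)) {c : ι → ℝ} (hc : ∀ k, 0 < c k) :
    (spectralMatrix b c).PosDef := by
  classical
  refine posDef_of_expVal_pos (isHermitian_spectralMatrix b c) fun v hv => ?_
  rw [expVal_spectralMatrix]
  have hnorm : 0 < ∑ k, ‖inner ℂ (b k) v‖ ^ 2 := by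
    rw [b.sum_sq_norm_inner_right]
    positivity
  obtain ⟨k, _, hk⟩ := Finset.exists_ne_zero_of_sum_ne_zero hnorm.ne'
  exact Finset.sum_pos' (fun j _ => mul_nonneg (hc j).le (sq_nonneg _))
    ⟨k, Finset.mem_univ k, mul_pos (hc k) ((sq_nonneg _).lt_of_ne' hk)⟩

variable [DecidableEq n]

lemma neg_vNEntropy_le_relEntropy {ρ σ : Matrix n n ℂ} (hρ : ρ.PosSemidef)
    (hσ : IsDensityMatrix σ) : -vNEntropy ρ ≤ relEntropy ρ σ := by
  rw [vNEntropy_eq_sum_negMulLog hρ.isHermitian, relEntropy_eq_sum hρ.isHermitian,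
    ← Finset.sum_neg_distrib]
  refine Finset.sum_le_sum fun k _ => ?_
  have := mul_nonpos_of_nonneg_of_nonpos (hρ.eigenvalues_nonneg k)
    (hσ.expVal_mlog_nonpos (hρ.isHermitian.eigenvectorBasis k))
  rw [Real.negMulLog]
  linarith

lemma smul_le_sum_eigenvalues_smul {ρ : Matrix n n ℂ} (hρ : ρ.PosSemidef)
    {κ : n → Matrix n n ℂ} (hκ : ∀ k, (κ k).PosSemidef) (k : n) :
    hρ.isHermitian.eigenvalues k • κ k ≤ ∑ j, hρ.isHermitian.eigenvalues j • κ j :=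
  Finset.single_le_sum (f := fun j => hρ.isHermitian.eigenvalues j • κ j)
    (fun j _ => Matrix.nonneg_iff_posSemidef.2 ((hκ j).smul (hρ.eigenvalues_nonneg j)))
    (Finset.mem_univ k)

/-- In the eigenbasis of `ρ` one may use a trial state of its own for each eigenvector: operator
monotonicity of the logarithm turns `λ_k κ_k ≤ ∑ λ_j κ_j` into a cost `-log λ_k`, which cancels
against the entropy of `ρ`. -/
lemma relEntropy_sum_eigenvalues_smul_le {ρ : Matrix n n ℂ} (hρ : ρ.PosSemidef)
    {κ : n → Matrix n n ℂ} (hκ : ∀ k, (κ k).PosDef) :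
    relEntropy ρ (∑ k, hρ.isHermitian.eigenvalues k • κ k) ≤
      ∑ k, hρ.isHermitian.eigenvalues k *
        -expVal (hρ.isHermitian.eigenvectorBasis k) (mlog (κ k)) := by
  rw [relEntropy_eq_sum hρ.isHermitian]
  refine Finset.sum_le_sum fun k _ => ?_
  rcases (hρ.eigenvalues_nonneg k).eq_or_lt with hzero | hpos
  · rw [← hzero, zero_mul, zero_mul]
  · have hmono := expVal_mono (mlog_mono ((hκ k).smul hpos)
      (smul_le_sum_eigenvalues_smul hρ (fun j => (hκ j).posSemidef) k))
      (hρ.isHermitian.eigenvectorBasis k)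
    rw [mlog_smul (hκ k) hpos, map_add, map_smul, expVal_one,
      OrthonormalBasis.norm_eq_one, one_pow, smul_eq_mul, mul_one] at hmono
    gcongr
    linarith

lemma posDef_sum_eigenvalues_smul {ρ : Matrix n n ℂ} (hρ : IsDensityMatrix ρ)
    {κ : n → Matrix n n ℂ} (hκ : ∀ k, (κ k).PosDef) :
    (∑ k, hρ.1.isHermitian.eigenvalues k • κ k).PosDef := by
  obtain ⟨k, _, hk⟩ := Finset.exists_ne_zero_of_sum_ne_zero
    (hρ.sum_eigenvalues.trans_ne one_ne_zero)
  have hpos := (hρ.1.eigenvalues_nonneg k).lt_of_ne' hk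
  rw [← sub_add_cancel (∑ k, hρ.1.isHermitian.eigenvalues k • κ k)
    (hρ.1.isHermitian.eigenvalues k • κ k)]
  exact .posSemidef_add (Matrix.le_iff.1
    (smul_le_sum_eigenvalues_smul hρ.1 (fun j => (hκ j).posSemidef) k)) ((hκ k).smul hpos)

end SpectralTrialStates

section EntanglementUpperBound

variable {dA dB : ℕ} {ρ : Matrix (Fin dA × Fin dB) (Fin dA × Fin dB) ℂ}

lemma suppLE_of_posDef {n : Type*} [Fintype n] (ρ : Matrix n n ℂ) {σ : Matrix n n ℂ}
    (hσ : σ.PosDef) : SuppLE ρ σ := fun v hv => by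
  classical
  rw [(Matrix.mulVec_injective_iff_isUnit.2 hσ.isUnit) (hv.trans (mulVec_zero σ).symm),
    mulVec_zero]

lemma relEntEntanglement_le (hρ : ρ.PosSemidef)
    {σ : Matrix (Fin dA × Fin dB) (Fin dA × Fin dB) ℂ} (hσ : IsSeparableState σ)
    (hpos : σ.PosDef) : relEntEntanglement ρ ≤ relEntropy ρ σ := by
  refine csInf_le ⟨-vNEntropy ρ, ?_⟩ ⟨σ, hσ, suppLE_of_posDef ρ hpos, rfl⟩
  rintro _ ⟨τ, hτ, -, rfl⟩
  exact neg_vNEntropy_le_relEntropy hρ hτ.isDensityMatrix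

lemma relEntEntanglement_le_sum (hρ : IsDensityMatrix ρ)
    {κ : Fin dA × Fin dB → Matrix (Fin dA × Fin dB) (Fin dA × Fin dB) ℂ}
    (hκ : ∀ k, IsSeparableState (κ k)) (hpos : ∀ k, (κ k).PosDef) :
    relEntEntanglement ρ ≤ ∑ k, hρ.1.isHermitian.eigenvalues k *
      -expVal (hρ.1.isHermitian.eigenvectorBasis k) (mlog (κ k)) :=
  (relEntEntanglement_le hρ.1
    (isSeparableState_sum hρ.1.eigenvalues_nonneg hρ.sum_eigenvalues hκ)
    (posDef_sum_eigenvalues_smul hρ hpos)).trans (relEntropy_sum_eigenvalues_smul_le hρ.1 hpos)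

end EntanglementUpperBound

section EigenvectorOverlap

variable {n : Type*} [Fintype n] [DecidableEq n]

lemma sum_sq_norm_inner_sub_norm_inner_le {ι E : Type*} [Fintype ι] [NormedAddCommGroup E]
    [InnerProductSpace ℂ E] (b : OrthonormalBasis ι ℂ E) {v w : E} (hv : ‖v‖ = 1) (hw : ‖w‖ = 1) :
    ∑ i, (‖inner ℂ (b i) v‖ - ‖inner ℂ (b i) w‖) ^ 2 ≤ 2 - 2 * ‖inner ℂ v w‖ := by
  have hinner : ‖inner ℂ v w‖ ≤ ∑ i, ‖inner ℂ (b i) v‖ * ‖inner ℂ (b i) w‖ := by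
    rw [← b.sum_inner_mul_inner]
    exact (norm_sum_le _ _).trans_eq
      (Finset.sum_congr rfl fun i _ => by rw [norm_mul, norm_inner_symm])
  simp only [sub_sq, Finset.sum_add_distrib, Finset.sum_sub_distrib, mul_assoc, ← Finset.mul_sum,
    b.sum_sq_norm_inner_right, hv, hw]
  linarith

lemma exists_expVal_le_eigenvalues {A : Matrix n n ℂ} (hA : A.IsHermitian)
    {v : EuclideanSpace ℂ n} (hv : ‖v‖ = 1) : ∃ k, expVal v A ≤ hA.eigenvalues k := by
  by_contra! hlt
  have hsum : ∑ k, ‖inner ℂ (hA.eigenvectorBasis k) v‖ ^ 2 = 1 := by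
    rw [hA.eigenvectorBasis.sum_sq_norm_inner_right, hv, one_pow]
  obtain ⟨k, _, hk⟩ := Finset.exists_ne_zero_of_sum_ne_zero (hsum.trans_ne one_ne_zero)
  have : expVal v A < ∑ k, expVal v A * ‖inner ℂ (hA.eigenvectorBasis k) v‖ ^ 2 := by
    conv_lhs => rw [eq_spectralMatrix_eigenvectorBasis hA, expVal_spectralMatrix]
    exact Finset.sum_lt_sum (fun j _ => mul_le_mul_of_nonneg_right (hlt j).le (sq_nonneg _))
      ⟨k, Finset.mem_univ k, mul_lt_mul_of_pos_right (hlt k) ((sq_nonneg _).lt_of_ne' hk)⟩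
  rw [← Finset.mul_sum, hsum, mul_one] at this
  exact this.false

lemma norm_toOp_sub_smul_sq {A : Matrix n n ℂ} (hA : A.IsHermitian) (a : ℝ)
    (v : EuclideanSpace ℂ n) : ‖toOp A v - a • v‖ ^ 2 =
      ∑ k, (hA.eigenvalues k - a) ^ 2 * ‖inner ℂ (hA.eigenvectorBasis k) v‖ ^ 2 := by
  rw [← hA.eigenvectorBasis.sum_sq_norm_inner_right]
  refine Finset.sum_congr rfl fun k _ => ?_
  have hinner : inner ℂ (hA.eigenvectorBasis k) (toOp A v - a • v) =
      (hA.eigenvalues k - a) • inner ℂ (hA.eigenvectorBasis k) v := by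
    have hself : inner ℂ (hA.eigenvectorBasis k) (toOp A v) =
        inner ℂ (toOp A (hA.eigenvectorBasis k)) v := by rw [inner_toOp_left, hA.eq]
    rw [inner_sub_right, hself, toOp_eigenvectorBasis, inner_smul_left_eq_smul,
      inner_smul_right_eq_smul, sub_smul]
  rw [hinner, norm_smul, mul_pow, Real.norm_eq_abs, sq_abs]

lemma IsDensityMatrix.one_sub_overlap_le {ρ : Matrix n n ℂ} (hρ : IsDensityMatrix ρ)
    {v : EuclideanSpace ℂ n} (hv : ‖v‖ = 1) {a : ℝ} (ha : 1 / 2 ≤ a) {k : n}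
    (hk : a ≤ hρ.1.isHermitian.eigenvalues k) :
    (2 * a - 1) ^ 2 * (1 - ‖inner ℂ (hρ.1.isHermitian.eigenvectorBasis k) v‖ ^ 2) ≤
      ‖toOp ρ v - a • v‖ ^ 2 := by
  have hrest : 1 - ‖inner ℂ (hρ.1.isHermitian.eigenvectorBasis k) v‖ ^ 2 =
      ∑ j ∈ Finset.univ.erase k, ‖inner ℂ (hρ.1.isHermitian.eigenvectorBasis j) v‖ ^ 2 := by
    rw [Finset.sum_erase_eq_sub (Finset.mem_univ k),
      hρ.1.isHermitian.eigenvectorBasis.sum_sq_norm_inner_right, hv, one_pow]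
  rw [norm_toOp_sub_smul_sq hρ.1.isHermitian, hrest, Finset.mul_sum]
  refine (Finset.sum_le_sum fun j hj => mul_le_mul_of_nonneg_right ?_ (sq_nonneg _)).trans
    (Finset.sum_le_sum_of_subset_of_nonneg (Finset.erase_subset k _) fun j _ _ => by positivity)
  have hsum : hρ.1.isHermitian.eigenvalues j + hρ.1.isHermitian.eigenvalues k ≤ 1 :=
    hρ.sum_eigenvalues ▸ Finset.add_le_sum (fun i _ => hρ.1.eigenvalues_nonneg i)
      (Finset.mem_univ j) (Finset.mem_univ k) (Finset.ne_of_mem_erase hj)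
  rw [← sq_abs (_ - a), abs_sub_comm]
  exact pow_le_pow_left₀ (by linarith) (le_trans (by linarith) (le_abs_self _)) 2

end EigenvectorOverlap

section SchmidtTrialStates

variable {dA dB : ℕ}

lemma nonempty_of_norm_eq_one {n : Type*} [Fintype n] {v : EuclideanSpace ℂ n} (hv : ‖v‖ = 1) :
    Nonempty n := by
  by_contra hempty
  rw [not_nonempty_iff] at hempty
  simp [Subsingleton.elim v 0] at hv

/-- The Schmidt basis of `Φ` carries a trial state for every unit vector: exact at `Φ` up to the
weight `s` of the maximally mixed state, and off by a square root of the distance from `Φ`. -/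
lemma exists_trialState {Φ : EuclideanSpace ℂ (Fin dA × Fin dB)} (hΦ : ‖Φ‖ = 1) :
    ∃ M : ℝ, ∀ s : ℝ, 0 < s → s < 1 →
      ∃ κ : Matrix (Fin dA × Fin dB) (Fin dA × Fin dB) ℂ, IsSeparableState κ ∧ κ.PosDef ∧
        ∀ u δ, ‖u‖ = 1 → 2 - 2 * ‖inner ℂ u Φ‖ ≤ δ →
          -expVal u (mlog κ) ≤ -Real.log (1 - s) + vNEntropy (ptraceR (ketBra Φ)) +
            4 * Real.log (min dA dB : ℕ) * √δ + (M - Real.log s) * δ := by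
  have := nonempty_of_norm_eq_one hΦ
  have := (nonempty_prod.1 this).2
  obtain ⟨b, hb, hcard, hentropy⟩ := exists_schmidt_basis Φ
  rw [Fintype.card_fin, Fintype.card_fin] at hcard
  have hsum (v : EuclideanSpace ℂ (Fin dA × Fin dB)) (hv : ‖v‖ = 1) :
      ∑ n, ‖inner ℂ (b n) v‖ ^ 2 = 1 := by rw [b.sum_sq_norm_inner_right, hv, one_pow]
  have hlog : √(∑ n, ‖inner ℂ (b n) Φ‖ ^ 2 * Real.log (‖inner ℂ (b n) Φ‖ ^ 2) ^ 2) ≤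
      2 * Real.log (min dA dB : ℕ) :=
    Real.sqrt_le_iff.2 ⟨by positivity, sum_mul_log_sq_le (fun _ => sq_nonneg _) (hsum Φ hΦ) hcard⟩
  refine ⟨∑ n, -Real.log (‖inner ℂ (b n) Φ‖ ^ 2) + Real.log (Fintype.card (Fin dA × Fin dB)),
    fun s hs₀ hs₁ => ?_⟩
  have hpos := mixUniform_pos hs₀ hs₁.le (p := fun n => ‖inner ℂ (b n) Φ‖ ^ 2)
    fun _ => sq_nonneg _
  refine ⟨spectralMatrix b (mixUniform s fun n => ‖inner ℂ (b n) Φ‖ ^ 2),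
    isSeparableState_spectralMatrix hb (fun n => (hpos n).le) (sum_mixUniform s (hsum Φ hΦ)),
    posDef_spectralMatrix b hpos, fun u δ hu hδ => ?_⟩
  have hbound := sum_neg_log_mixUniform_mul_sq_le (fun n => norm_nonneg (inner ℂ (b n) Φ))
    (hsum u hu) (hsum Φ hΦ) hs₀ hs₁ ((sum_sq_norm_inner_sub_norm_inner_le b hu hΦ).trans hδ)
  have hsqrt := mul_le_mul_of_nonneg_left hlog (Real.sqrt_nonneg δ)
  rw [Real.log_div (Nat.cast_ne_zero.2 Fintype.card_ne_zero) hs₀.ne', hentropy] at hbound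
  simp only [neg_mul, Finset.sum_neg_distrib] at hbound ⊢
  rw [mlog_spectralMatrix, expVal_spectralMatrix]
  linarith

lemma vNEntropy_ptraceR_ketBra_le_log {Φ : EuclideanSpace ℂ (Fin dA × Fin dB)} (hΦ : ‖Φ‖ = 1) :
    vNEntropy (ptraceR (ketBra Φ)) ≤ Real.log (min dA dB : ℕ) := by
  have := (nonempty_prod.1 (nonempty_of_norm_eq_one hΦ)).2
  obtain ⟨b, -, hcard, hentropy⟩ := exists_schmidt_basis Φ
  rw [Fintype.card_fin, Fintype.card_fin] at hcard
  rw [← hentropy]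
  exact sum_negMulLog_le_log (fun _ => sq_nonneg _)
    (by rw [b.sum_sq_norm_inner_right, hΦ, one_pow]) hcard

end SchmidtTrialStates

section NearlyPureStates

variable {dA dB : ℕ}

lemma vNEntropy_ptraceR_le_relEntEntanglement {Ψ : EuclideanSpace ℂ (Fin dA × Fin dB)}
    (hΨ : ‖Ψ‖ = 1) : vNEntropy (ptraceR (ketBra Ψ)) ≤ relEntEntanglement (ketBra Ψ) := by
  obtain ⟨M, hM⟩ := exists_trialState hΨ
  obtain ⟨κ, hκ, hpos, -⟩ := hM (1 / 2) (by norm_num) (by norm_num)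
  refine le_csInf ⟨_, κ, hκ, suppLE_of_posDef _ hpos, rfl⟩ ?_
  rintro _ ⟨σ, hσ, hsupp, rfl⟩
  exact vNEntropy_ptraceR_le_relEntropy hΨ hσ hsupp

lemma exists_trialState_le_log {Φ : EuclideanSpace ℂ (Fin dA × Fin dB)} (hΦ : ‖Φ‖ = 1) {s : ℝ}
    (hs₀ : 0 < s) (hs₁ : s < 1) :
    ∃ κ : Matrix (Fin dA × Fin dB) (Fin dA × Fin dB) ℂ, IsSeparableState κ ∧ κ.PosDef ∧
      -expVal Φ (mlog κ) ≤ -Real.log (1 - s) + Real.log (min dA dB : ℕ) := by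
  obtain ⟨M, hM⟩ := exists_trialState hΦ
  obtain ⟨κ, hκ, hpos, hcost⟩ := hM s hs₀ hs₁
  have hself := hcost Φ 0 hΦ (by rw [inner_self_eq_norm_sq_to_K, hΦ]; norm_num)
  rw [Real.sqrt_zero, mul_zero, mul_zero, add_zero, add_zero] at hself
  exact ⟨κ, hκ, hpos, hself.trans (by gcongr; exact vNEntropy_ptraceR_ketBra_le_log hΦ)⟩

lemma two_sub_two_mul_le {q G : ℝ} (hq₀ : 0 ≤ q) (hq₁ : q ≤ 1) (hG : 1 - q ^ 2 ≤ G) :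
    2 - 2 * q ≤ G * (1 + G) := by
  have hsq : 0 ≤ 1 - q ^ 2 := by nlinarith
  calc 2 - 2 * q ≤ 2 - 2 * q + q * (1 - q) ^ 2 * (2 + q) := by
        linarith [show 0 ≤ q * (1 - q) ^ 2 * (2 + q) by positivity]
    _ = (1 - q ^ 2) * (1 + (1 - q ^ 2)) := by ring
    _ ≤ G * (1 + G) := mul_le_mul hG (by linarith) (by linarith) (hsq.trans hG)

lemma sum_mul_le_add_of_le_ite {ι : Type*} [Fintype ι] [DecidableEq ι] {p c : ι → ℝ}
    (hp : ∀ i, 0 ≤ p i) (hsum : ∑ i, p i = 1) {i₀ : ι} {C₀ C₁ a : ℝ}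
    (hc : ∀ i, c i ≤ if i = i₀ then C₀ else C₁) (hC₀ : 0 ≤ C₀) (hC₁ : 0 ≤ C₁) (ha : a ≤ p i₀) :
    ∑ i, p i * c i ≤ C₀ + (1 - a) * C₁ := by
  have hp₀ : p i₀ ≤ 1 := hsum ▸ Finset.single_le_sum (fun j _ => hp j) (Finset.mem_univ i₀)
  have hrest : ∑ i ∈ {i₀}ᶜ, p i = 1 - p i₀ := by
    rw [← hsum, Fintype.sum_eq_add_sum_compl i₀, add_sub_cancel_left]
  calc ∑ i, p i * c i ≤ ∑ i, p i * if i = i₀ then C₀ else C₁ :=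
        Finset.sum_le_sum fun i _ => mul_le_mul_of_nonneg_left (hc i) (hp i)
    _ = p i₀ * C₀ + ∑ i ∈ {i₀}ᶜ, p i * C₁ := by
        rw [Fintype.sum_eq_add_sum_compl i₀, if_pos rfl]
        congr 1
        exact Finset.sum_congr rfl fun i hi => by rw [if_neg (by simpa using hi)]
    _ = p i₀ * C₀ + (1 - p i₀) * C₁ := by rw [← Finset.sum_mul, hrest]
    _ ≤ C₀ + (1 - a) * C₁ := by
        gcongr
        exact mul_le_of_le_one_left hC₀ hp₀

/-- All eigenvectors of a nearly pure state but one carry little weight, so it suffices to compare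
the dominant one with `Ψ`. -/
theorem exists_relEntEntanglement_sub_le {Ψ : EuclideanSpace ℂ (Fin dA × Fin dB)}
    (hΨ : ‖Ψ‖ = 1) :
    ∃ M : ℝ, ∀ ρ : Matrix (Fin dA × Fin dB) (Fin dA × Fin dB) ℂ, IsDensityMatrix ρ →
      ∀ a s G : ℝ, expVal Ψ ρ = a → 1 / 2 < a → 0 < s → s < 1 →
        ‖toOp ρ Ψ - a • Ψ‖ ^ 2 ≤ (2 * a - 1) ^ 2 * G →
        relEntEntanglement ρ - relEntEntanglement (ketBra Ψ) ≤
          -Real.log (1 - s) + 4 * Real.log (min dA dB : ℕ) * √(G * (1 + G)) +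
            (M - Real.log s) * (G * (1 + G)) +
            (1 - a) * (-Real.log (1 - s) + Real.log (min dA dB : ℕ)) := by
  classical
  obtain ⟨M, hM⟩ := exists_trialState hΨ
  refine ⟨M, fun ρ hρ a s G ha ha₂ hs₀ hs₁ hG => ?_⟩
  have hunit := hρ.1.isHermitian.eigenvectorBasis.norm_eq_one
  obtain ⟨k₀, hk₀⟩ := exists_expVal_le_eigenvalues hρ.1.isHermitian hΨ
  rw [ha] at hk₀
  have hoverlap := le_of_mul_le_mul_left ((hρ.one_sub_overlap_le hΨ ha₂.le hk₀).trans hG)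
    (by nlinarith)
  set C₀ := -Real.log (1 - s) + vNEntropy (ptraceR (ketBra Ψ)) +
    4 * Real.log (min dA dB : ℕ) * √(G * (1 + G)) + (M - Real.log s) * (G * (1 + G))
  set C₁ := -Real.log (1 - s) + Real.log (min dA dB : ℕ)
  have htrial (k : Fin dA × Fin dB) : ∃ κ : Matrix (Fin dA × Fin dB) (Fin dA × Fin dB) ℂ,
      IsSeparableState κ ∧ κ.PosDef ∧
        -expVal (hρ.1.isHermitian.eigenvectorBasis k) (mlog κ) ≤ if k = k₀ then C₀ else C₁ := by
    split_ifs with hk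
    · obtain ⟨κ, hκ, hpos, hcost⟩ := hM s hs₀ hs₁
      exact ⟨κ, hκ, hpos, hcost _ _ (hunit k) (two_sub_two_mul_le (norm_nonneg _)
        ((norm_inner_le_norm _ _).trans_eq (by rw [hunit, hΨ, one_mul])) (hk ▸ hoverlap))⟩
    · exact exists_trialState_le_log (hunit k) hs₀ hs₁
  choose κ hκ hpos hcost using htrial
  have hC₀_nonneg : 0 ≤ C₀ := by
    have hk := hcost k₀
    rw [if_pos rfl] at hk
    linarith [(hκ k₀).isDensityMatrix.expVal_mlog_nonpos
      (hρ.1.isHermitian.eigenvectorBasis k₀)]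
  have hC₁_nonneg : 0 ≤ C₁ :=
    add_nonneg (neg_nonneg.2 (Real.log_nonpos (by linarith) (by linarith))) (by positivity)
  have hsum := (relEntEntanglement_le_sum hρ hκ hpos).trans
    (sum_mul_le_add_of_le_ite hρ.1.eigenvalues_nonneg hρ.sum_eigenvalues hcost hC₀_nonneg
      hC₁_nonneg hk₀)
  linarith [vNEntropy_ptraceR_le_relEntEntanglement hΨ]

end NearlyPureStates

section LindbladGenerator

variable {n ι : Type*} [Fintype n] [Fintype ι]

lemma isLinearMap_lindblad (H : Matrix n n ℂ) (L : ι → Matrix n n ℂ) :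
    IsLinearMap ℂ (lindblad H L) where
  map_add A B := by
    simp only [lindblad, mul_add, add_mul, smul_add, smul_sub, Finset.sum_add_distrib,
      Finset.sum_sub_distrib]
    abel
  map_smul c A := by
    simp only [lindblad, mul_smul_comm, smul_mul_assoc, smul_add, smul_sub, Finset.smul_sum,
      smul_comm c]

lemma lindblad_conjTranspose {H : Matrix n n ℂ} (hH : H.IsHermitian) (L : ι → Matrix n n ℂ)
    (A : Matrix n n ℂ) : (lindblad H L A)ᴴ = lindblad H L Aᴴ := by
  simp only [lindblad, conjTranspose_add, conjTranspose_sub, conjTranspose_smul, conjTranspose_mul,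
    conjTranspose_sum, conjTranspose_conjTranspose, hH.eq, Matrix.mul_assoc]
  congr 1
  · simp only [star_neg, RCLike.star_def, Complex.conj_I, neg_neg, smul_sub, neg_smul]
    abel
  · refine Finset.sum_congr rfl fun α _ => ?_
    simp only [star_inv₀, star_ofNat]
    abel

lemma trace_lindblad (H : Matrix n n ℂ) (L : ι → Matrix n n ℂ) (A : Matrix n n ℂ) :
    (lindblad H L A).trace = 0 := by
  simp only [lindblad, trace_add, trace_smul, trace_sub, trace_sum]
  rw [trace_mul_comm H A, sub_self, smul_zero, zero_add]
  refine Finset.sum_eq_zero fun α _ => ?_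
  rw [trace_mul_comm (L α * A), Matrix.mul_assoc A, trace_mul_comm A, Matrix.mul_assoc]
  simp only [smul_eq_mul]
  ring

variable [DecidableEq n]

lemma toOp_lindblad_apply (H : Matrix n n ℂ) (L : ι → Matrix n n ℂ) (A : Matrix n n ℂ)
    (v : EuclideanSpace ℂ n) :
    toOp (lindblad H L A) v = -Complex.I • (toOp H (toOp A v) - toOp A (toOp H v)) +
      ∑ α, (toOp (L α) (toOp A (toOp (L α)ᴴ v)) -
        (2 : ℂ)⁻¹ • toOp (L α)ᴴ (toOp (L α) (toOp A v)) -
        (2 : ℂ)⁻¹ • toOp A (toOp (L α)ᴴ (toOp (L α) v))) := by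
  simp only [lindblad, map_add, map_smul, map_sub, map_sum, map_mul, _root_.add_apply,
    _root_.smul_apply, _root_.sub_apply, _root_.sum_apply, mul_apply_eq_comp]

lemma expVal_lindblad_of_toOp_eq_zero (H : Matrix n n ℂ) (L : ι → Matrix n n ℂ)
    {A : Matrix n n ℂ} (hA : A.IsHermitian) {v : EuclideanSpace ℂ n} (hv : toOp A v = 0) :
    expVal v (lindblad H L A) = ∑ α, expVal (toOp (L α)ᴴ v) A := by
  have hrange (w : EuclideanSpace ℂ n) : inner ℂ v (toOp A w) = 0 := by
    rw [← hA.eq, ← inner_toOp_left, hv, inner_zero_left]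
  simp only [expVal_apply, toOp_lindblad_apply, hv, map_zero, inner_add_right, inner_smul_right,
    inner_sub_right, inner_sum, hrange, inner_zero_right, smul_zero, mul_zero, sub_zero, zero_add,
    Complex.re_sum]
  exact Finset.sum_congr rfl fun α _ => by rw [inner_toOp_left, conjTranspose_conjTranspose]

end LindbladGenerator

section FirstTouching

lemma pos_of_deriv_pos_of_touch {X : Type*} [TopologicalSpace X] {K : Set X} (hK : IsCompact K)
    {f f' : ℝ → X → ℝ} (hcont : Continuous (Function.uncurry f)) (hzero : ∀ x ∈ K, 0 < f 0 x)
    (hderiv : ∀ t, ∀ x ∈ K, HasDerivAt (fun s => f s x) (f' t x) t)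
    (htouch : ∀ t, ∀ x ∈ K, f t x = 0 → (∀ y ∈ K, 0 ≤ f t y) → 0 < f' t x)
    {t : ℝ} (ht : 0 ≤ t) {x : X} (hx : x ∈ K) : 0 < f t x := by
  by_contra! hneg
  have hcompact : IsCompact ((Set.Icc 0 t ×ˢ K) ∩ {z | Function.uncurry f z ≤ 0}) :=
    (isCompact_Icc.prod hK).inter_right (isClosed_le hcont continuous_const)
  obtain ⟨⟨t₁, x₁⟩, ⟨⟨⟨ht₁, ht₁t⟩, hx₁⟩, hle₁⟩, hfirst⟩ := hcompact.exists_isMinOn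
    ⟨(t, x), ⟨⟨ht, le_rfl⟩, hx⟩, hneg⟩ continuous_fst.continuousOn
  have hbefore (s : ℝ) (hs : s ∈ Set.Ico 0 t₁) (y : X) (hy : y ∈ K) : 0 < f s y := by
    by_contra! hle
    exact hs.2.not_ge (hfirst (a := (s, y)) ⟨⟨⟨hs.1, hs.2.le.trans ht₁t⟩, hy⟩, hle⟩)
  have ht₁_pos : 0 < t₁ := ht₁.lt_of_ne fun h : 0 = t₁ =>
    (hzero x₁ hx₁).not_ge (by subst h; exact hle₁)
  have hleft : Set.Ioo 0 t₁ ∈ nhdsWithin t₁ (Set.Iio t₁) := Ioo_mem_nhdsLT ht₁_pos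
  have hnonneg (y : X) (hy : y ∈ K) : 0 ≤ f t₁ y :=
    ge_of_tendsto ((hderiv t₁ y hy).continuousAt.continuousWithinAt (s := Set.Iio t₁)) <| by
      filter_upwards [hleft] with s hs using (hbefore s ⟨hs.1.le, hs.2⟩ y hy).le
  have hf₁ : f t₁ x₁ = 0 := le_antisymm hle₁ (hnonneg x₁ hx₁)
  refine (htouch t₁ x₁ hx₁ hf₁ hnonneg).not_ge (le_of_tendsto
    ((hasDerivWithinAt_iff_tendsto_slope' (s := Set.Iio t₁) (by simp)).1
      (hderiv t₁ x₁ hx₁).hasDerivWithinAt) ?_)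
  filter_upwards [hleft] with s hs
  rw [slope_def_field, hf₁, sub_zero]
  exact div_nonpos_of_nonneg_of_nonpos (hbefore s ⟨hs.1.le, hs.2⟩ x₁ hx₁).le
    (sub_nonpos.2 hs.2.le)

end FirstTouching

section InwardGenerator

variable {n ι : Type*} [Fintype n] [DecidableEq n] [Fintype ι] {H : Matrix n n ℂ}
  {L : ι → Matrix n n ℂ}

lemma continuous_expVal {X : Type*} [TopologicalSpace X] {A : X → Matrix n n ℂ}
    {v : X → EuclideanSpace ℂ n} (hA : Continuous A) (hv : Continuous v) :
    Continuous fun x => expVal (v x) (A x) := by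
  have htoOp : Continuous (toOp : Matrix n n ℂ → _) :=
    (toOp : Matrix n n ℂ ≃⋆ₐ[ℂ] _).toAlgEquiv.toLinearMap.continuous_of_finiteDimensional
  exact Complex.continuous_re.comp (hv.inner ((htoOp.comp hA).clm_apply hv))

lemma expVal_smul_vec (c : ℂ) (v : EuclideanSpace ℂ n) (A : Matrix n n ℂ) :
    expVal (c • v) A = ‖c‖ ^ 2 * expVal v A := by
  rw [expVal_apply, map_smul, inner_smul_left, inner_smul_right, ← mul_assoc, Complex.conj_mul',
    ← Complex.ofReal_pow, Complex.re_ofReal_mul, expVal_apply]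

lemma posSemidef_of_expVal_sphere {A : Matrix n n ℂ} (hA : A.IsHermitian)
    (h : ∀ v ∈ Metric.sphere 0 1, 0 ≤ expVal v A) : A.PosSemidef := by
  refine posSemidef_iff_expVal.2 ⟨hA, fun v => ?_⟩
  rcases eq_or_ne v 0 with rfl | hv
  · simp [expVal_apply]
  · have hunit := h ((‖v‖⁻¹ : ℂ) • v) (by simp [norm_smul, hv])
    rw [expVal_smul_vec] at hunit
    exact nonneg_of_mul_nonneg_right hunit
      (pow_pos (norm_pos_iff.2 (by simpa using hv)) 2)

lemma toOp_eq_zero_of_expVal_eq_zero {A : Matrix n n ℂ} (hA : A.PosSemidef)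
    {v : EuclideanSpace ℂ n} (hv : expVal v A = 0) : toOp A v = 0 := by
  refine WithLp.ofLp_injective 2 ((hA.dotProduct_mulVec_zero_iff v.ofLp).1 (Complex.ext ?_
    (hA.isHermitian.im_star_dotProduct_mulVec_self _)))
  rwa [expVal_apply, EuclideanSpace.inner_eq_star_dotProduct, dotProduct_comm] at hv

lemma expVal_lindblad_nonneg (H : Matrix n n ℂ) (L : ι → Matrix n n ℂ) {A : Matrix n n ℂ}
    (hA : A.PosSemidef) {v : EuclideanSpace ℂ n} (hv : expVal v A = 0) :
    0 ≤ expVal v (lindblad H L A) := by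
  rw [expVal_lindblad_of_toOp_eq_zero H L hA.isHermitian (toOp_eq_zero_of_expVal_eq_zero hA hv)]
  exact Finset.sum_nonneg fun α _ => expVal_nonneg hA _

lemma expVal_lindblad_pos_of_touch {A : Matrix n n ℂ} (hA : A.IsHermitian) {c η : ℝ} (hη : 0 < η)
    (hc : ∀ v ∈ Metric.sphere 0 1, expVal v (lindblad H L 1) < c)
    (hnonneg : ∀ v ∈ Metric.sphere 0 1, 0 ≤ expVal v A + η) {v : EuclideanSpace ℂ n}
    (hv : v ∈ Metric.sphere 0 1) (htouch : expVal v A + η = 0) :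
    0 < expVal v (lindblad H L A) + η * c := by
  have hshift (w : EuclideanSpace ℂ n) (hw : w ∈ Metric.sphere 0 1) :
      expVal w (A + η • 1) = expVal w A + η := by
    rw [map_add, map_smul, expVal_one, mem_sphere_zero_iff_norm.1 hw, one_pow, smul_eq_mul, mul_one]
  have hpsd : (A + η • 1).PosSemidef := posSemidef_of_expVal_sphere
    (hA.add (PosSemidef.one.smul hη.le).isHermitian) fun w hw => hshift w hw ▸ hnonneg w hw
  have hinward := expVal_lindblad_nonneg H L hpsd ((hshift v hv).trans htouch)
  rw [(isLinearMap_lindblad H L).map_add, ← Complex.coe_smul, (isLinearMap_lindblad H L).map_smul,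
    Complex.coe_smul, map_add, map_smul, smul_eq_mul] at hinward
  linarith [mul_lt_mul_of_pos_left (hc v hv) hη]

end InwardGenerator

section LindbladEvolution

open scoped Matrix.Norms.Elementwise

variable {n ι : Type*} [Fintype n] [Fintype ι] {H : Matrix n n ℂ} {L : ι → Matrix n n ℂ}
  {ρ : ℝ → Matrix n n ℂ}

lemma hasDerivAt_linearMap_comp {E F : Type*} [NormedAddCommGroup E] [NormedSpace ℝ E]
    [FiniteDimensional ℝ E] [NormedAddCommGroup F] [NormedSpace ℝ F] (φ : E →ₗ[ℝ] F) {γ : ℝ → E}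
    {γ' : E} {t : ℝ} (hγ : HasDerivAt γ γ' t) : HasDerivAt (fun s => φ (γ s)) (φ γ') t :=
  (LinearMap.toContinuousLinearMap φ).hasFDerivAt.comp_hasDerivAt t hγ

lemma trace_eq_of_lindblad (hdyn : ∀ t, HasDerivAt ρ (lindblad H L (ρ t)) t) (t : ℝ) :
    (ρ t).trace = (ρ 0).trace := by
  have hderiv (t : ℝ) : HasDerivAt (fun s => (ρ s).trace) 0 t := by
    rw [← trace_lindblad H L (ρ t)]
    exact hasDerivAt_linearMap_comp (traceLinearMap n ℝ ℂ) (hdyn t)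
  exact is_const_of_deriv_eq_zero (fun t => (hderiv t).differentiableAt)
    (fun t => (hderiv t).deriv) t 0

lemma isHermitian_of_lindblad (hH : H.IsHermitian)
    (hdyn : ∀ t, HasDerivAt ρ (lindblad H L (ρ t)) t) (h0 : (ρ 0).IsHermitian) (t : ℝ) :
    (ρ t).IsHermitian := by
  let generator : Matrix n n ℂ →L[ℂ] Matrix n n ℂ :=
    LinearMap.toContinuousLinearMap ((isLinearMap_lindblad H L).mk' _)
  have hadjoint (t : ℝ) : HasDerivAt (fun s => (ρ s)ᴴ) (lindblad H L (ρ t)ᴴ) t := by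
    rw [← lindblad_conjTranspose hH]
    exact (hdyn t).star
  exact congrFun (ODE_solution_unique_univ (v := fun _ => generator) (s := fun _ => Set.univ)
    (fun _ => generator.lipschitz.lipschitzOnWith) (fun t => ⟨hadjoint t, trivial⟩)
    (fun t => ⟨hdyn t, trivial⟩) h0.eq) t

/-- Adding `η e^{ct}` with `c` large makes the flow strictly positive: at a first zero the
generator would push inwards. -/
theorem posSemidef_of_lindblad (hH : H.IsHermitian)
    (hdyn : ∀ t, HasDerivAt ρ (lindblad H L (ρ t)) t) (h0 : (ρ 0).PosSemidef) {t : ℝ}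
    (ht : 0 ≤ t) : (ρ t).PosSemidef := by
  classical
  have hherm := isHermitian_of_lindblad hH hdyn h0.isHermitian
  have hρ : Continuous ρ := continuous_iff_continuousAt.2 fun t => (hdyn t).continuousAt
  have hsphere := isCompact_sphere (0 : EuclideanSpace ℂ n) 1
  obtain ⟨c, hc⟩ := (hsphere.image (continuous_expVal (A := fun _ => lindblad H L 1)
    continuous_const continuous_id)).bddAbove
  have hpos (η : ℝ) (hη : 0 < η) (v : EuclideanSpace ℂ n) (hv : v ∈ Metric.sphere 0 1) :
      0 < expVal v (ρ t) + η * Real.exp ((c + 1) * t) := by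
    refine pos_of_deriv_pos_of_touch hsphere
      (f := fun t v => expVal v (ρ t) + η * Real.exp ((c + 1) * t))
      (f' := fun t v => expVal v (lindblad H L (ρ t)) + η * Real.exp ((c + 1) * t) * (c + 1))
      ?_ (fun w _ => ?_) (fun t w _ => ?_) (fun t w hw htouch hnonneg => ?_) ht hv
    · exact (continuous_expVal (hρ.comp continuous_fst) continuous_snd).add (by fun_prop)
    · exact add_pos_of_nonneg_of_pos (expVal_nonneg h0 w) (by positivity)
    · refine (hasDerivAt_linearMap_comp (expVal w) (hdyn t)).add ?_
      exact (((hasDerivAt_id t).const_mul (c + 1)).exp.const_mul η).congr_deriv (by rw [id]; ring)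
    · exact expVal_lindblad_pos_of_touch (hherm t) (by positivity)
        (fun u hu => (hc (Set.mem_image_of_mem _ hu)).trans_lt (lt_add_one c)) hnonneg hw htouch
  refine posSemidef_of_expVal_sphere (hherm t) fun v hv => le_of_forall_pos_lt_add fun ε hε => ?_
  have := hpos (ε * Real.exp (-((c + 1) * t))) (by positivity) v hv
  rwa [mul_assoc, ← Real.exp_add, neg_add_cancel, Real.exp_zero, mul_one] at this

theorem isDensityMatrix_of_lindblad (hH : H.IsHermitian)
    (hdyn : ∀ t, HasDerivAt ρ (lindblad H L (ρ t)) t) (h0 : IsDensityMatrix (ρ 0)) {t : ℝ}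
    (ht : 0 ≤ t) : IsDensityMatrix (ρ t) :=
  ⟨posSemidef_of_lindblad hH hdyn h0.1 ht, (trace_eq_of_lindblad hdyn t).trans h0.2⟩

end LindbladEvolution

section InitialRates

variable {n ι : Type*} [Fintype n] [DecidableEq n] [Fintype ι]

lemma norm_toOp_le (A : Matrix n n ℂ) {v : EuclideanSpace ℂ n} {r : ℝ} (hv : ‖v‖ ≤ r) :
    ‖toOp A v‖ ≤ opNorm A * r :=
  (toOp A).le_opNorm_of_le hv

lemma opNorm_conjTranspose (A : Matrix n n ℂ) : opNorm Aᴴ = opNorm A := by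
  rw [opNorm, opNorm, ← adjoint_toOp, LinearIsometryEquiv.norm_map]

lemma toOp_lindblad_ketBra_self (H : Matrix n n ℂ) (L : ι → Matrix n n ℂ) {Ψ : EuclideanSpace ℂ n}
    (hΨ : ‖Ψ‖ = 1) :
    toOp (lindblad H L (ketBra Ψ)) Ψ =
      -Complex.I • (toOp H Ψ - inner ℂ Ψ (toOp H Ψ) • Ψ) +
        ∑ α, (inner ℂ Ψ (toOp (L α)ᴴ Ψ) • toOp (L α) Ψ -
          (2 : ℂ)⁻¹ • toOp (L α)ᴴ (toOp (L α) Ψ) -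
          (2 : ℂ)⁻¹ • inner ℂ Ψ (toOp (L α)ᴴ (toOp (L α) Ψ)) • Ψ) := by
  simp only [toOp_lindblad_apply, toOp_ketBra_apply, inner_self_eq_one_of_norm_eq_one hΨ, one_smul,
    map_smul]

lemma neg_expVal_lindblad_ketBra_le (H : Matrix n n ℂ) (L : ι → Matrix n n ℂ)
    {Ψ : EuclideanSpace ℂ n} (hΨ : ‖Ψ‖ = 1) :
    -expVal Ψ (lindblad H L (ketBra Ψ)) ≤ ∑ α, opNorm (L α) ^ 2 := by
  have hexp : expVal Ψ (lindblad H L (ketBra Ψ)) =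
      ∑ α, (‖inner ℂ Ψ (toOp (L α) Ψ)‖ ^ 2 - ‖toOp (L α) Ψ‖ ^ 2) := by
    rw [expVal_apply, toOp_lindblad_ketBra_self H L hΨ]
    simp only [inner_add_right, inner_sub_right, inner_smul_right, inner_sum,
      inner_self_eq_one_of_norm_eq_one hΨ, mul_one, sub_self, mul_zero, zero_add, Complex.re_sum]
    refine Finset.sum_congr rfl fun α _ => ?_
    have hadj (w : EuclideanSpace ℂ n) :
        inner ℂ Ψ (toOp (L α)ᴴ w) = inner ℂ (toOp (L α) Ψ) w := (inner_toOp_left _ _ _).symm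
    have hself : inner ℂ (toOp (L α) Ψ) (toOp (L α) Ψ) = (‖toOp (L α) Ψ‖ ^ 2 : ℝ) := by
      rw [inner_self_eq_norm_sq_to_K]
      norm_cast
    rw [hadj, hadj, hself, ← inner_conj_symm, Complex.conj_mul', sub_sub, ← two_mul,
      mul_inv_cancel_left₀ two_ne_zero]
    norm_cast
  rw [hexp, ← Finset.sum_neg_distrib]
  refine Finset.sum_le_sum fun α _ => ?_
  have hL : ‖toOp (L α) Ψ‖ ^ 2 ≤ opNorm (L α) ^ 2 :=
    pow_le_pow_left₀ (norm_nonneg _) (by simpa using norm_toOp_le (L α) hΨ.le) 2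
  linarith [sq_nonneg ‖inner ℂ Ψ (toOp (L α) Ψ)‖]

lemma ofReal_expVal {A : Matrix n n ℂ} (hA : A.IsHermitian) (v : EuclideanSpace ℂ n) :
    (expVal v A : ℂ) = inner ℂ v (toOp A v) := by
  rw [expVal_apply]
  refine Complex.conj_eq_iff_re.1 ?_
  rw [inner_conj_symm, inner_toOp_left, hA.eq]

lemma toOp_sub_expVal_smul {A : Matrix n n ℂ} (hA : A.IsHermitian) {Ψ : EuclideanSpace ℂ n}
    (hΨ : ‖Ψ‖ = 1) :
    toOp A Ψ - expVal Ψ A • Ψ = (Submodule.span ℂ {Ψ})ᗮ.starProjection (toOp A Ψ) := by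
  rw [Submodule.starProjection_orthogonal_val, Submodule.starProjection_unit_singleton _ hΨ,
    ← ofReal_expVal hA, Complex.coe_smul]

lemma norm_lindblad_ketBra_sub_expVal_smul_le {H : Matrix n n ℂ} (hH : H.IsHermitian)
    (L : ι → Matrix n n ℂ) {Ψ : EuclideanSpace ℂ n} (hΨ : ‖Ψ‖ = 1) :
    ‖toOp (lindblad H L (ketBra Ψ)) Ψ - expVal Ψ (lindblad H L (ketBra Ψ)) • Ψ‖ ≤
      opNorm H + 3 / 2 * ∑ α, opNorm (L α) ^ 2 := by
  have hherm : (lindblad H L (ketBra Ψ)).IsHermitian := by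
    rw [Matrix.IsHermitian, lindblad_conjTranspose hH, (posSemidef_ketBra Ψ).isHermitian.eq]
  set Q := (Submodule.span ℂ {Ψ})ᗮ.starProjection
  have hQ (v : EuclideanSpace ℂ n) : ‖Q v‖ ≤ ‖v‖ := Submodule.norm_starProjection_apply_le _ v
  have hQΨ : Q Ψ = 0 := by
    rw [Submodule.starProjection_orthogonal_val, Submodule.starProjection_unit_singleton _ hΨ,
      inner_self_eq_one_of_norm_eq_one hΨ, one_smul, sub_self]
  have hjump (α : ι) : ‖inner ℂ Ψ (toOp (L α)ᴴ Ψ) • Q (toOp (L α) Ψ) -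
      (2 : ℂ)⁻¹ • Q (toOp (L α)ᴴ (toOp (L α) Ψ))‖ ≤ 3 / 2 * opNorm (L α) ^ 2 := by
    have hL : ‖toOp (L α) Ψ‖ ≤ opNorm (L α) := by simpa using norm_toOp_le (L α) hΨ.le
    have hL' : ‖toOp (L α)ᴴ Ψ‖ ≤ opNorm (L α) := by
      simpa [opNorm_conjTranspose] using norm_toOp_le (L α)ᴴ hΨ.le
    have hLL : ‖toOp (L α)ᴴ (toOp (L α) Ψ)‖ ≤ opNorm (L α) * opNorm (L α) := by
      simpa [opNorm_conjTranspose] using norm_toOp_le (L α)ᴴ hL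
    have hinner : ‖inner ℂ Ψ (toOp (L α)ᴴ Ψ)‖ ≤ opNorm (L α) :=
      (norm_inner_le_norm _ _).trans (by rwa [hΨ, one_mul])
    refine (norm_sub_le _ _).trans ?_
    rw [norm_smul, norm_smul, norm_inv, RCLike.norm_ofNat]
    linarith [mul_le_mul hinner ((hQ _).trans hL) (norm_nonneg _) (norm_nonneg _),
      (hQ _).trans hLL]
  rw [toOp_sub_expVal_smul hherm hΨ, toOp_lindblad_ketBra_self H L hΨ]
  change ‖Q _‖ ≤ _
  simp only [map_add, map_sub, map_sum, map_smul, hQΨ, smul_zero, sub_zero]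
  refine (norm_add_le _ _).trans (add_le_add ?_ ?_)
  · rw [norm_smul, norm_neg, Complex.norm_I, one_mul]
    simpa using (hQ _).trans (norm_toOp_le H hΨ.le)
  · rw [Finset.mul_sum]
    exact norm_sum_le_of_le _ fun α _ => hjump α

lemma entangling_rate_le {H : Matrix n n ℂ} (hH : H.IsHermitian) (L : ι → Matrix n n ℂ)
    {Ψ : EuclideanSpace ℂ n} (hΨ : ‖Ψ‖ = 1) :
    -expVal Ψ (lindblad H L (ketBra Ψ)) +
        4 * ‖toOp (lindblad H L (ketBra Ψ)) Ψ - expVal Ψ (lindblad H L (ketBra Ψ)) • Ψ‖ ≤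
      4 * opNorm H + 7 * ∑ α, opNorm (L α) ^ 2 := by
  linarith [neg_expVal_lindblad_ketBra_le H L hΨ,
    norm_lindblad_ketBra_sub_expVal_smul_le hH L hΨ]

end InitialRates

section ShortTimeAsymptotics

open Filter Topology

lemma tendsto_log_one_sub_sq_div :
    Tendsto (fun t : ℝ => Real.log (1 - t ^ 2) / t) (𝓝[>] 0) (𝓝 0) := by
  have hderiv : HasDerivAt (fun t : ℝ => Real.log (1 - t ^ 2)) 0 0 := by
    simpa using (((hasDerivAt_id (0 : ℝ)).pow 2).const_sub 1).log (by norm_num)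
  refine hderiv.tendsto_slope_zero_right.congr fun t => ?_
  simp [div_eq_inv_mul]

lemma tendsto_mul_sub_log_sq (M : ℝ) :
    Tendsto (fun t : ℝ => t * (M - Real.log (t ^ 2))) (𝓝[>] 0) (𝓝 0) := by
  have hid : Tendsto (fun t : ℝ => t) (𝓝[>] 0) (𝓝 0) := tendsto_id.mono_left nhdsWithin_le_nhds
  have hlim := (hid.mul_const M).sub
    ((tendsto_log_mul_rpow_nhdsGT_zero (r := 1) one_pos).const_mul 2)
  rw [zero_mul, mul_zero, sub_zero] at hlim
  refine hlim.congr fun t => ?_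
  rw [Real.log_pow, Real.rpow_one]
  push_cast
  ring

lemma tendsto_norm_sq_div_sq {E : Type*} [NormedAddCommGroup E] [NormedSpace ℝ E] {γ : ℝ → E}
    {γ' : E} (hγ : HasDerivAt γ γ' 0) (h0 : γ 0 = 0) :
    Tendsto (fun t => ‖γ t‖ ^ 2 / t ^ 2) (𝓝[>] 0) (𝓝 (‖γ'‖ ^ 2)) := by
  refine (hγ.tendsto_slope_zero_right.norm.pow 2).congr fun t => ?_
  rw [zero_add, h0, sub_zero, norm_smul, norm_inv, mul_pow, inv_pow, Real.norm_eq_abs, sq_abs,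
    div_eq_inv_mul]

lemma tendsto_mul_one_add_div_sq {a N : ℝ → ℝ} {κ : ℝ} (ha : Tendsto a (𝓝[>] 0) (𝓝 1))
    (hN : Tendsto (fun t => N t / t ^ 2) (𝓝[>] 0) (𝓝 κ)) :
    Tendsto (fun t => N t / (2 * a t - 1) ^ 2 * (1 + N t / (2 * a t - 1) ^ 2) / t ^ 2)
      (𝓝[>] 0) (𝓝 κ) := by
  have hsq : Tendsto (fun t : ℝ => t ^ 2) (𝓝[>] 0) (𝓝 0) := by
    simpa using (tendsto_id.mono_left nhdsWithin_le_nhds : Tendsto _ (𝓝[>] (0 : ℝ)) _).pow 2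
  have hden : Tendsto (fun t => (2 * a t - 1) ^ 2) (𝓝[>] 0) (𝓝 1) := by
    convert ((ha.const_mul 2).sub_const 1).pow 2 using 2
    norm_num
  have hG : Tendsto (fun t => N t / (2 * a t - 1) ^ 2 / t ^ 2) (𝓝[>] 0) (𝓝 κ) := by
    simpa only [Pi.div_def, div_one, div_right_comm] using hN.div hden one_ne_zero
  have hG₀ : Tendsto (fun t => N t / (2 * a t - 1) ^ 2) (𝓝[>] 0) (𝓝 0) := by
    have hlim := hG.mul hsq
    rw [mul_zero] at hlim
    refine hlim.congr' ?_
    filter_upwards [self_mem_nhdsWithin] with t (ht : 0 < t)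
    rw [div_mul_cancel₀ _ (by positivity)]
  simpa only [add_zero, mul_one, div_mul_eq_mul_div] using hG.mul (hG₀.const_add 1)

lemma tendsto_trialState_bound_div {a E : ℝ → ℝ} {r κ : ℝ} (hκ : 0 ≤ κ) (ℓ M : ℝ)
    (ha : Tendsto (fun t => (1 - a t) / t) (𝓝[>] 0) (𝓝 r))
    (hE : Tendsto (fun t => E t / t ^ 2) (𝓝[>] 0) (𝓝 (κ ^ 2))) :
    Tendsto (fun t => (-Real.log (1 - t ^ 2) + 4 * ℓ * √(E t) + (M - Real.log (t ^ 2)) * E t +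
      (1 - a t) * (-Real.log (1 - t ^ 2) + ℓ)) / t) (𝓝[>] 0) (𝓝 ((r + 4 * κ) * ℓ)) := by
  have hid : Tendsto (fun t : ℝ => t) (𝓝[>] 0) (𝓝 0) := tendsto_id.mono_left nhdsWithin_le_nhds
  have hlog := tendsto_log_one_sub_sq_div.neg
  have hsqrt : Tendsto (fun t => √(E t / t ^ 2)) (𝓝[>] 0) (𝓝 κ) := by
    simpa only [Real.sqrt_sq hκ] using hE.sqrt
  have hlim := ((hlog.add (hsqrt.const_mul (4 * ℓ))).add
    ((tendsto_mul_sub_log_sq M).mul hE)).add (ha.mul ((hlog.mul hid).add_const ℓ))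
  rw [show -(0 : ℝ) + 4 * ℓ * κ + 0 * κ ^ 2 + r * (-0 * 0 + ℓ) = (r + 4 * κ) * ℓ by ring] at hlim
  refine hlim.congr' ?_
  filter_upwards [self_mem_nhdsWithin] with t (ht : 0 < t)
  rw [Real.sqrt_div' _ (sq_nonneg t), Real.sqrt_sq ht.le]
  field_simp

end ShortTimeAsymptotics

section EntanglingRate

open Filter Topology
open scoped Matrix.Norms.Elementwise

variable {dA dB : ℕ} {Ψ : EuclideanSpace ℂ (Fin dA × Fin dB)}
  {ρ : ℝ → Matrix (Fin dA × Fin dB) (Fin dA × Fin dB) ℂ}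

theorem eventually_relEntEntanglement_rate_le (hΨ : ‖Ψ‖ = 1) (h0 : ρ 0 = ketBra Ψ)
    (hρ : ∀ t > 0, IsDensityMatrix (ρ t))
    {X : Matrix (Fin dA × Fin dB) (Fin dA × Fin dB) ℂ} (hX : HasDerivAt ρ X 0)
    {ε : ℝ} (hε : 0 < ε) :
    ∀ᶠ t in 𝓝[>] 0, (relEntEntanglement (ρ t) - relEntEntanglement (ρ 0)) / t ≤
      (-expVal Ψ X + 4 * ‖toOp X Ψ - expVal Ψ X • Ψ‖) * Real.log (min dA dB : ℕ) + ε := by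
  obtain ⟨M, hM⟩ := exists_relEntEntanglement_sub_le hΨ
  set a : ℝ → ℝ := fun t => expVal Ψ (ρ t)
  set N : ℝ → ℝ := fun t => ‖toOp (ρ t) Ψ - a t • Ψ‖ ^ 2
  have ha₀ : a 0 = 1 := by simp [a, h0, expVal_ketBra, hΨ]
  have ha : HasDerivAt a (expVal Ψ X) 0 := hasDerivAt_linearMap_comp (expVal Ψ) hX
  have hrate : Tendsto (fun t => (1 - a t) / t) (𝓝[>] 0) (𝓝 (-expVal Ψ X)) := by
    refine ha.tendsto_slope_zero_right.neg.congr fun t => ?_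
    rw [zero_add, ha₀, smul_eq_mul]
    ring
  have ha₁ : Tendsto a (𝓝[>] 0) (𝓝 1) := ha₀ ▸ ha.continuousAt.continuousWithinAt
  have hN : Tendsto (fun t => N t / t ^ 2) (𝓝[>] 0) (𝓝 (‖toOp X Ψ - expVal Ψ X • Ψ‖ ^ 2)) := by
    refine tendsto_norm_sq_div_sq (HasDerivAt.sub ?_ (ha.smul_const Ψ)) ?_
    · exact hasDerivAt_linearMap_comp
        ((LinearMap.applyₗ Ψ ∘ₗ (toEuclideanLin (𝕜 := ℂ)).toLinearMap).restrictScalars ℝ) hX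
    · rw [ha₀, h0, toOp_ketBra_apply, inner_self_eq_one_of_norm_eq_one hΨ, one_smul, one_smul,
        sub_self]
  have hlim := tendsto_trialState_bound_div (norm_nonneg _) (Real.log (min dA dB : ℕ)) M hrate
    (tendsto_mul_one_add_div_sq ha₁ hN)
  filter_upwards [hlim.eventually_lt_const (lt_add_of_pos_right _ hε),
    ha₁.eventually_const_lt one_half_lt_one, self_mem_nhdsWithin,
    Ioo_mem_nhdsGT one_pos] with t hlt hhalf (ht : 0 < t) ht₁
  refine le_trans (div_le_div_of_nonneg_right ?_ ht.le) hlt.le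
  rw [h0]
  refine hM (ρ t) (hρ t ht) (a t) (t ^ 2) _ rfl hhalf (by positivity)
    (pow_lt_one₀ ht.le ht₁.2 two_ne_zero) (mul_div_cancel₀ _ ?_).ge
  exact pow_ne_zero 2 (by linarith)

end EntanglingRate

section SmallIncrementalEntangling

open Filter Topology
open scoped Matrix.Norms.Elementwise

theorem small_incremental_entangling_relEnt_general {dA dB : ℕ} {ι : Type*} [Fintype ι]
    (H : Matrix (Fin dA × Fin dB) (Fin dA × Fin dB) ℂ) (hH : H.IsHermitian)
    (L : ι → Matrix (Fin dA × Fin dB) (Fin dA × Fin dB) ℂ)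
    (Ψ : Fin dA × Fin dB → ℂ) (hΨ : ∑ i, Complex.normSq (Ψ i) = 1)
    (ρ : ℝ → Matrix (Fin dA × Fin dB) (Fin dA × Fin dB) ℂ)
    (h0 : ρ 0 = Matrix.vecMulVec Ψ (star Ψ))
    (hdyn : ∀ t i j, HasDerivAt (fun s => ρ s i j) (lindblad H L (ρ t) i j) t) :
    ∀ ε > 0, ∃ δ > 0, ∀ Δt, 0 < Δt → Δt < δ →
      (relEntEntanglement (ρ Δt) - relEntEntanglement (ρ 0)) / Δt ≤
        (4 * opNorm H + 7 * ∑ α, opNorm (L α) ^ 2) * Real.log (min dA dB : ℕ) + ε := by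
  intro ε hε
  have hunit : ‖WithLp.toLp 2 Ψ‖ = 1 := by
    rw [EuclideanSpace.norm_eq, Real.sqrt_eq_one, ← hΨ]
    simp only [Complex.normSq_eq_norm_sq]
  have hevolve (t : ℝ) : HasDerivAt ρ (lindblad H L (ρ t)) t :=
    hasDerivAt_pi.2 fun i => hasDerivAt_pi.2 (hdyn t i)
  have hpure : ρ 0 = ketBra (WithLp.toLp 2 Ψ) := h0
  have hdensity (t : ℝ) (ht : 0 < t) : IsDensityMatrix (ρ t) :=
    isDensityMatrix_of_lindblad hH hevolve (hpure ▸ isDensityMatrix_ketBra hunit) ht.le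
  obtain ⟨δ, hδ, hrate⟩ := mem_nhdsGT_iff_exists_Ioo_subset.1
    (eventually_relEntEntanglement_rate_le hunit hpure hdensity (hevolve 0) hε)
  refine ⟨δ, hδ, fun t ht htδ => (hrate ⟨ht, htδ⟩).trans ?_⟩
  rw [hpure]
  exact add_le_add_left (mul_le_mul_of_nonneg_right (entangling_rate_le hH L hunit)
    (Real.log_natCast_nonneg _)) ε

end SmallIncrementalEntangling

/-- Small incremental entangling for the relative entropy of entanglement in an
ancilla-free bipartite system evolving under a Lindblad generator. -/
theorem small_incremental_entangling_relEnt {dA dB m : ℕ}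
    (H : Matrix (Fin dA × Fin dB) (Fin dA × Fin dB) ℂ) (hH : H.IsHermitian)
    (L : Fin m → Matrix (Fin dA × Fin dB) (Fin dA × Fin dB) ℂ)
    (Ψ : Fin dA × Fin dB → ℂ) (hΨ : ∑ i, Complex.normSq (Ψ i) = 1)
    (ρ : ℝ → Matrix (Fin dA × Fin dB) (Fin dA × Fin dB) ℂ)
    (h0 : ρ 0 = Matrix.vecMulVec Ψ (star Ψ))
    (hdyn : ∀ t i j, HasDerivAt (fun s => ρ s i j) (lindblad H L (ρ t) i j) t) :
    ∀ ε > 0, ∃ δ > 0, ∀ Δt, 0 < Δt → Δt < δ →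
      (relEntEntanglement (ρ Δt) - relEntEntanglement (ρ 0)) / Δt ≤
        4 * (opNorm H + 86 * ∑ α, (opNorm (L α)) ^ 2) * Real.log (min dA dB : ℕ) + ε := by
  intro ε hε
  obtain ⟨δ, hδ, hrate⟩ := small_incremental_entangling_relEnt_general H hH L Ψ hΨ ρ h0 hdyn ε hε
  have hL : 0 ≤ ∑ α, opNorm (L α) ^ 2 := by positivity
  exact ⟨δ, hδ, fun t ht htδ => (hrate t ht htδ).trans (by gcongr; linarith)⟩
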